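/- For the K-user binary-input covert MAC, the covert capacity region (the closure of the set of achievable covert throughput tuples) equals the union, over all ρ ∈ [0,1]^K with Σ_{k=1}^K ρ_k = 1, of the sets { r ∈ ℝ^K : 0 ≤ r_k ≤ √(2/χ(ρ)) · ρ_k · D(P_k‖P_∅) for every k ∈ {1,…,K} }, where χ(ρ) := Σ_z (Σ_k ρ_k(Q_k(z) − Q_∅(z)))² / Q_∅(z). -/

import Mathlib

open Finset Filter
open scoped Topology Classical

noncomputable section

/-- `P` is a probability distribution on the finite type `Z`. -/
def IsDist {Z : Type*} [Fintype Z] (P : Z → ℝ) : Prop :=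
  (∀ z, 0 ≤ P z) ∧ ∑ z, P z = 1

/-- Kullback–Leibler divergence `D(P‖Q)` (natural logarithm). -/
def klDiv {Z : Type*} [Fintype Z] (P Q : Z → ℝ) : ℝ :=
  ∑ z, P z * Real.log (P z / Q z)

/-- `P` is absolutely continuous w.r.t. `Q`. -/
def AbsCont {Z : Type*} (P Q : Z → ℝ) : Prop :=
  ∀ z, Q z = 0 → P z = 0

/-- The binary input vector having ones exactly at the indices in `U`. -/
def xU {K : ℕ} (U : Finset (Fin K)) : Fin K → Bool :=
  fun k => decide (k ∈ U)

/-- Bernoulli distribution on `Bool` with success probability `p`. -/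
def bern (p : ℝ) : Bool → ℝ := fun b => if b then p else 1 - p

/-- `n`-fold memoryless extension of a channel `W`. -/
def prodChannel {A Z : Type*} (W : A → Z → ℝ) (n : ℕ)
    (x : Fin n → A) (z : Fin n → Z) : ℝ :=
  ∏ j, W (x j) (z j)

/-- `χ(ρ) := Σ_z (Σ_k ρ_k (Q_k(z) - Q_∅(z)))² / Q_∅(z)` for the warden channel `Wz`. -/
def chiRho {K : ℕ} {Z : Type*} [Fintype Z] (Wz : (Fin K → Bool) → Z → ℝ)
    (ρ : Fin K → ℝ) : ℝ :=
  ∑ z, (∑ k, ρ k * (Wz (xU {k}) z - Wz (xU ∅) z)) ^ 2 / Wz (xU ∅) z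

/-- The distribution `Q̂ⁿ` induced at the warden by a code with encoders `enc`, uniform
messages and uniform keys. -/
def Qhat {K n : ℕ} {Z : Type*} [Fintype Z] (Wz : (Fin K → Bool) → Z → ℝ)
    (M L : Fin K → ℕ) (enc : ∀ k, Fin (M k) × Fin (L k) → Fin n → Bool)
    (z : Fin n → Z) : ℝ :=
  (∏ k, ((M k : ℝ) * (L k : ℝ)))⁻¹ *
    ∑ m : ∀ k, Fin (M k), ∑ l : ∀ k, Fin (L k),
      prodChannel Wz n (fun j k => enc k (m k, l k) j) z

/-- The average probability of decoding error of a code over the `n`-fold extension of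
the channel `Wy`, with uniform messages and uniform keys. -/
def Pe {K n : ℕ} {Y : Type*} [Fintype Y] (Wy : (Fin K → Bool) → Y → ℝ)
    (M L : Fin K → ℕ) (enc : ∀ k, Fin (M k) × Fin (L k) → Fin n → Bool)
    (dec : (Fin n → Y) → (∀ k, Fin (L k)) → ∀ k, Fin (M k)) : ℝ :=
  (∏ k, ((M k : ℝ) * (L k : ℝ)))⁻¹ *
    ∑ m : ∀ k, Fin (M k), ∑ l : ∀ k, Fin (L k), ∑ y : Fin n → Y,
      prodChannel Wy n (fun j k => enc k (m k, l k) j) y *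
        (if dec y l = m then 0 else 1)

/-- `δₙ = D(Q̂ⁿ ‖ Q_∅^{⊗n})`. -/
def deltaN {K n : ℕ} {Z : Type*} [Fintype Z] (Wz : (Fin K → Bool) → Z → ℝ)
    (M L : Fin K → ℕ) (enc : ∀ k, Fin (M k) × Fin (L k) → Fin n → Bool) : ℝ :=
  klDiv (Qhat Wz M L enc) (fun z : Fin n → Z => ∏ j, Wz (xU ∅) (z j))

/-! ### Uniform averages over finite types -/

/-- Uniform average of `f` over a finite type. -/
def av {Ω : Type*} [Fintype Ω] (f : Ω → ℝ) : ℝ := (Fintype.card Ω : ℝ)⁻¹ * ∑ ω, f ω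

/-- Real indicator of a Boolean. -/
def ind (b : Bool) : ℝ := if b then 1 else 0

lemma ind_nonneg (b : Bool) : 0 ≤ ind b := by unfold ind; split_ifs <;> norm_num

lemma ind_le_one (b : Bool) : ind b ≤ 1 := by unfold ind; split_ifs <;> norm_num

lemma av_const {Ω : Type*} [Fintype Ω] [Nonempty Ω] (c : ℝ) : av (fun _ : Ω => c) = c := by
  have : (Fintype.card Ω : ℝ) ≠ 0 := by exact_mod_cast Fintype.card_ne_zero
  simp [av]

lemma av_add {Ω : Type*} [Fintype Ω] (f g : Ω → ℝ) :
    av (fun ω => f ω + g ω) = av f + av g := by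
  simp [av, Finset.sum_add_distrib, mul_add]

lemma av_sub {Ω : Type*} [Fintype Ω] (f g : Ω → ℝ) :
    av (fun ω => f ω - g ω) = av f - av g := by
  simp [av, Finset.sum_sub_distrib, mul_sub]

lemma av_mul_left {Ω : Type*} [Fintype Ω] (c : ℝ) (f : Ω → ℝ) :
    av (fun ω => c * f ω) = c * av f := by
  simp only [av, ← Finset.mul_sum]; ring

lemma av_mul_right {Ω : Type*} [Fintype Ω] (c : ℝ) (f : Ω → ℝ) :
    av (fun ω => f ω * c) = av f * c := by
  simp only [av, ← Finset.sum_mul]; ring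

lemma av_sum {Ω ι : Type*} [Fintype Ω] (s : Finset ι) (f : ι → Ω → ℝ) :
    av (fun ω => ∑ i ∈ s, f i ω) = ∑ i ∈ s, av (f i) := by
  simp only [av]; rw [Finset.sum_comm, Finset.mul_sum]

lemma av_mono {Ω : Type*} [Fintype Ω] {f g : Ω → ℝ} (h : ∀ ω, f ω ≤ g ω) : av f ≤ av g := by
  unfold av
  exact mul_le_mul_of_nonneg_left (Finset.sum_le_sum fun i _ => h i) (by positivity)

lemma av_nonneg {Ω : Type*} [Fintype Ω] {f : Ω → ℝ} (h : ∀ ω, 0 ≤ f ω) : 0 ≤ av f := by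
  unfold av
  exact mul_nonneg (by positivity) (Finset.sum_nonneg fun i _ => h i)

lemma av_abs_le {Ω : Type*} [Fintype Ω] (f : Ω → ℝ) : |av f| ≤ av (fun ω => |f ω|) := by
  unfold av
  rw [abs_mul, abs_of_nonneg (by positivity)]
  exact mul_le_mul_of_nonneg_left (Finset.abs_sum_le_sum_abs _ _) (by positivity)

lemma av_pos_of {Ω : Type*} [Fintype Ω] {f : Ω → ℝ} (h : ∀ ω, 0 ≤ f ω) (ω₀ : Ω)
    (h0 : f ω₀ ≠ 0) : 0 < av f := by
  unfold av
  have : Nonempty Ω := ⟨ω₀⟩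
  have hc : (0 : ℝ) < Fintype.card Ω := by exact_mod_cast Fintype.card_pos
  refine mul_pos (by positivity) ?_
  exact Finset.sum_pos' (fun i _ => h i)
    ⟨ω₀, Finset.mem_univ _, lt_of_le_of_ne (h ω₀) (Ne.symm h0)⟩

lemma av_equiv {Ω Ω' : Type*} [Fintype Ω] [Fintype Ω'] (e : Ω ≃ Ω') (f : Ω' → ℝ) :
    av (fun ω => f (e ω)) = av f := by
  unfold av
  rw [Fintype.card_congr e, Equiv.sum_comp e f]

lemma av_comm {Ω Ω' : Type*} [Fintype Ω] [Fintype Ω'] (f : Ω → Ω' → ℝ) :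
    av (fun a => av (fun b => f a b)) = av (fun b => av (fun a => f a b)) := by
  simp only [av, Finset.mul_sum]
  rw [Finset.sum_comm]
  refine Finset.sum_congr rfl fun b _ => Finset.sum_congr rfl fun a _ => ?_
  ring

lemma av_update {ι : Type*} [Fintype ι] [DecidableEq ι] {Ω : ι → Type*} [∀ k, Fintype (Ω k)]
    [∀ k, Nonempty (Ω k)] (k : ι) (f : (∀ k, Ω k) → ℝ) :
    av f = av (fun c => av (fun a => f (Function.update c k a))) := by
  have hinv : Function.Involutive (fun p : (∀ k, Ω k) × Ω k =>
      (Function.update p.1 k p.2, p.1 k)) := by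
    rintro ⟨c, a⟩; simp
  have h1 : ∑ p : (∀ k, Ω k) × Ω k, f (Function.update p.1 k p.2)
      = ∑ p : (∀ k, Ω k) × Ω k, f p.1 :=
    Equiv.sum_comp (hinv.toPerm) (fun p => f p.1)
  rw [Fintype.sum_prod_type, Fintype.sum_prod_type] at h1
  simp only [Finset.sum_const, Finset.card_univ, nsmul_eq_mul, ← Finset.mul_sum] at h1
  have hc : (Fintype.card (Ω k) : ℝ) ≠ 0 := by exact_mod_cast Fintype.card_ne_zero
  simp only [av, ← Finset.mul_sum]
  rw [h1]; field_simp

lemma av_coord {ι : Type*} [Fintype ι] [DecidableEq ι] {Ω : ι → Type*} [∀ k, Fintype (Ω k)]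
    [∀ k, Nonempty (Ω k)] (k : ι) (f : Ω k → ℝ) :
    av (fun c : ∀ k, Ω k => f (c k)) = av f := by
  rw [av_update k]; simp [av_const]

lemma av_pair {ι : Type*} [Fintype ι] [DecidableEq ι] {Ω : ι → Type*} [∀ k, Fintype (Ω k)]
    [∀ k, Nonempty (Ω k)] {i k : ι} (hik : i ≠ k) (f : Ω i → ℝ) (g : Ω k → ℝ) :
    av (fun c : ∀ k, Ω k => f (c i) * g (c k)) = av f * av g := by
  rw [av_update k]
  simp only [Function.update_self, Function.update_of_ne hik, av_mul_left, av_mul_right]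
  rw [av_coord i f]

lemma av_pi_prod {ι Ω : Type*} [Fintype ι] [DecidableEq ι] [Fintype Ω] (f : ι → Ω → ℝ) :
    av (fun c : ι → Ω => ∏ j, f j (c j)) = ∏ j, av (f j) := by
  unfold av
  rw [Finset.prod_mul_distrib, Finset.prod_univ_sum]
  simp

/-- Sums over messages and keys are averages over pairs. -/
lemma av_code {K : ℕ} (M L : Fin K → ℕ) (F : (∀ k, Fin (M k) × Fin (L k)) → ℝ) :
    (∏ k, ((M k : ℝ) * (L k : ℝ)))⁻¹ *
      ∑ m : ∀ k, Fin (M k), ∑ l : ∀ k, Fin (L k), F (fun k => (m k, l k)) = av F := by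
  unfold av
  congr 1
  · simp [Fintype.card_pi]
  · rw [← Fintype.sum_prod_type' (fun (m : ∀ k, Fin (M k)) (l : ∀ k, Fin (L k)) =>
      F (fun k => (m k, l k)))]
    let e : ((∀ k, Fin (M k)) × (∀ k, Fin (L k))) ≃ (∀ k, Fin (M k) × Fin (L k)) :=
      { toFun := fun p k => (p.1 k, p.2 k)
        invFun := fun q => (fun k => (q k).1, fun k => (q k).2)
        left_inv := fun p => rfl
        right_inv := fun q => rfl }
    exact Equiv.sum_comp e F

lemma av_code2 {K : ℕ} (M L : Fin K → ℕ) (F : (∀ k, Fin (M k)) → (∀ k, Fin (L k)) → ℝ) :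
    (∏ k, ((M k : ℝ) * (L k : ℝ)))⁻¹ *
      ∑ m : ∀ k, Fin (M k), ∑ l : ∀ k, Fin (L k), F m l
      = av (fun m => av (fun l => F m l)) := by
  unfold av
  simp only [← Finset.mul_sum, Fintype.card_pi, Fintype.card_fin, Finset.prod_mul_distrib]
  push_cast
  rw [mul_inv, mul_assoc]

/-! ### Boolean vectors -/

lemma xU_filter {K : ℕ} (x : Fin K → Bool) : xU (Finset.univ.filter fun k => x k = true) = x := by
  funext k; simp [xU]

lemma exists_xU {K : ℕ} (x : Fin K → Bool) : ∃ U, xU U = x := ⟨_, xU_filter x⟩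

lemma xU_inj {K : ℕ} {U V : Finset (Fin K)} (h : xU U = xU V) : U = V := by
  ext k
  have := congrFun h k
  simpa [xU] using this

/-- Pairwise collision count. -/
def coll {K : ℕ} (x : Fin K → Bool) : ℝ :=
  ∑ k, ∑ i ∈ Finset.univ.erase k, ind (x i) * ind (x k)

lemma first_order_pointwise {K : ℕ} (F : (Fin K → Bool) → ℝ) (B : ℝ) (hF : ∀ x, |F x| ≤ B)
    (x : Fin K → Bool) :
    |F x - F (xU ∅) - ∑ k, ind (x k) * (F (xU {k}) - F (xU ∅))| ≤ (2 * B + 2 * B * K) * coll x := by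
  have hB : 0 ≤ B := (abs_nonneg _).trans (hF (xU ∅))
  have hcoll0 : 0 ≤ coll x := Finset.sum_nonneg fun k _ => Finset.sum_nonneg fun i _ =>
    mul_nonneg (ind_nonneg _) (ind_nonneg _)
  by_cases h : ∃ i k, i ≠ k ∧ x i = true ∧ x k = true
  · obtain ⟨i, k, hik, hi, hk⟩ := h
    have hc : 1 ≤ coll x := by
      have h1 : ind (x i) * ind (x k) ≤ ∑ i ∈ Finset.univ.erase k, ind (x i) * ind (x k) :=
        Finset.single_le_sum (f := fun i => ind (x i) * ind (x k))
          (fun i _ => mul_nonneg (ind_nonneg _) (ind_nonneg _)) (by simp [hik])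
      have h2 : ∑ i ∈ Finset.univ.erase k, ind (x i) * ind (x k) ≤ coll x :=
        Finset.single_le_sum (f := fun k => ∑ i ∈ Finset.univ.erase k, ind (x i) * ind (x k))
          (fun k _ => Finset.sum_nonneg fun i _ =>
            mul_nonneg (ind_nonneg _) (ind_nonneg _)) (Finset.mem_univ k)
      have h0 : ind (x i) * ind (x k) = 1 := by simp [ind, hi, hk]
      linarith
    have h3 : |∑ k, ind (x k) * (F (xU {k}) - F (xU ∅))| ≤ K * (2 * B) := by
      refine (Finset.abs_sum_le_sum_abs _ _).trans ?_
      have : ∀ k ∈ (Finset.univ : Finset (Fin K)),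
          |ind (x k) * (F (xU {k}) - F (xU ∅))| ≤ 2 * B := by
        intro k _
        rw [abs_mul, abs_of_nonneg (ind_nonneg _)]
        have h4 : |F (xU {k}) - F (xU ∅)| ≤ 2 * B := by
          have := abs_sub (F (xU {k})) (F (xU ∅))
          linarith [hF (xU {k}), hF (xU ∅)]
        nlinarith [ind_nonneg (x k), ind_le_one (x k), abs_nonneg (F (xU {k}) - F (xU ∅))]
      refine (Finset.sum_le_sum this).trans ?_
      simp
    have h5 : |F x - F (xU ∅)| ≤ 2 * B := by
      have := abs_sub (F x) (F (xU ∅))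
      linarith [hF x, hF (xU ∅)]
    have h6 := abs_sub (F x - F (xU ∅)) (∑ k, ind (x k) * (F (xU {k}) - F (xU ∅)))
    have h7 : 0 ≤ 2 * B + 2 * B * K := by positivity
    nlinarith
  · push Not at h
    have hz : F x - F (xU ∅) - ∑ k, ind (x k) * (F (xU {k}) - F (xU ∅)) = 0 := by
      by_cases hx : ∃ k, x k = true
      · obtain ⟨k, hk⟩ := hx
        have hxk : x = xU {k} := by
          funext i
          by_cases hik : i = k
          · subst hik; simp [xU, hk]
          · have := h i k hik
            by_cases hi : x i = true
            · exact absurd hk (this hi)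
            · simp [xU, hik, Bool.eq_false_iff.mpr hi]
        rw [Finset.sum_eq_single k]
        · rw [← hxk]; simp [ind, hk]
        · intro i _ hik
          have : x i = false := by rw [hxk]; simp [xU, hik]
          simp [ind, this]
        · simp
      · push Not at hx
        have hx0 : x = xU ∅ := by funext i; simpa [xU] using hx i
        simp [hx0, ind, xU]
    rw [hz, abs_zero]
    positivity

lemma av_coll {K : ℕ} {Ω : Fin K → Type*} [∀ k, Fintype (Ω k)] [∀ k, Nonempty (Ω k)]
    (x : ∀ k, Ω k → Bool) :
    av (fun ω : ∀ k, Ω k => coll (fun k => x k (ω k))) ≤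
      (∑ k, av (fun a => ind (x k a))) ^ 2 := by
  unfold coll
  rw [av_sum, sq, Finset.mul_sum]
  refine Finset.sum_le_sum fun k _ => ?_
  rw [av_sum, Finset.sum_mul]
  have : ∀ i ∈ Finset.univ.erase k,
      av (fun ω : ∀ k, Ω k => ind (x i (ω i)) * ind (x k (ω k)))
        = av (fun a => ind (x i a)) * av (fun a => ind (x k a)) := by
    intro i hi
    exact av_pair (Finset.ne_of_mem_erase hi) (fun a => ind (x i a)) (fun a => ind (x k a))
  rw [Finset.sum_congr rfl this]
  refine Finset.sum_le_sum_of_subset_of_nonneg (Finset.erase_subset _ _) fun i _ _ => ?_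
  exact mul_nonneg (av_nonneg fun _ => ind_nonneg _) (av_nonneg fun _ => ind_nonneg _)

/-- First-order expansion of an expectation over independent Boolean inputs. -/
lemma first_order {K : ℕ} {Ω : Fin K → Type*} [∀ k, Fintype (Ω k)] [∀ k, Nonempty (Ω k)]
    (x : ∀ k, Ω k → Bool) (F : (Fin K → Bool) → ℝ) (B : ℝ) (hF : ∀ x, |F x| ≤ B) :
    |av (fun ω : ∀ k, Ω k => F (fun k => x k (ω k))) - F (xU ∅)
        - ∑ k, av (fun a => ind (x k a)) * (F (xU {k}) - F (xU ∅))|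
      ≤ (2 * B + 2 * B * K) * (∑ k, av (fun a => ind (x k a))) ^ 2 := by
  have hB : 0 ≤ B := (abs_nonneg _).trans (hF (xU ∅))
  have h1 : av (fun ω : ∀ k, Ω k => F (fun k => x k (ω k))) - F (xU ∅)
        - ∑ k, av (fun a => ind (x k a)) * (F (xU {k}) - F (xU ∅))
      = av (fun ω : ∀ k, Ω k => F (fun k => x k (ω k)) - F (xU ∅)
        - ∑ k, ind (x k (ω k)) * (F (xU {k}) - F (xU ∅))) := by
    rw [av_sub, av_sub, av_const, av_sum]
    congr 1
    refine Finset.sum_congr rfl fun k _ => ?_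
    rw [av_mul_right]
    congr 1
    exact (av_coord k (fun a => ind (x k a))).symm
  rw [h1]
  refine (av_abs_le _).trans ((av_mono fun ω => first_order_pointwise F B hF _).trans ?_)
  rw [av_mul_left]
  exact mul_le_mul_of_nonneg_left (av_coll x) (by positivity)

/-! ### Divergence inequalities -/

/-- Donsker–Varadhan style lower bound on the divergence. -/
lemma klDiv_ge {Z : Type*} [Fintype Z] (P R G : Z → ℝ) (hP : IsDist P) (hR : ∀ z, 0 ≤ R z)
    (hAC : AbsCont P R) (hG : ∀ z, P z ≠ 0 → 0 < G z) (hG0 : ∀ z, 0 ≤ R z * G z)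
    (hsum : ∑ z, R z * G z ≤ 1) :
    ∑ z, P z * Real.log (G z) ≤ klDiv P R := by
  have key : ∀ z, P z * Real.log (G z) - P z * Real.log (P z / R z) ≤ R z * G z - P z := by
    intro z
    by_cases hz : P z = 0
    · simp [hz, hG0 z]
    · have hp : 0 < P z := lt_of_le_of_ne (hP.1 z) (Ne.symm hz)
      have hr : 0 < R z := lt_of_le_of_ne (hR z) (fun h => hz (hAC z h.symm))
      have hg := hG z hz
      have h1 : Real.log (G z) - Real.log (P z / R z) = Real.log (R z * G z / P z) := by
        rw [Real.log_div hp.ne' hr.ne', Real.log_div (by positivity) hp.ne',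
          Real.log_mul hr.ne' hg.ne']
        ring
      have h2 := Real.log_le_sub_one_of_pos (show 0 < R z * G z / P z by positivity)
      rw [← mul_sub, h1]
      calc P z * Real.log (R z * G z / P z) ≤ P z * (R z * G z / P z - 1) :=
            mul_le_mul_of_nonneg_left h2 hp.le
        _ = R z * G z - P z := by field_simp
  have h3 := Finset.sum_le_sum fun z (_ : z ∈ Finset.univ) => key z
  rw [Finset.sum_sub_distrib, Finset.sum_sub_distrib, hP.2] at h3
  unfold klDiv
  linarith

lemma klDiv_nonneg' {Z : Type*} [Fintype Z] (P R : Z → ℝ) (hP : IsDist P) (hR : IsDist R)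
    (hAC : AbsCont P R) : 0 ≤ klDiv P R := by
  have := klDiv_ge P R (fun _ => 1) hP hR.1 hAC (by simp) (by simpa using hR.1)
    (by simp [hR.2])
  simpa using this

/-! ### Product channels -/

lemma sum_prod_pi {n : ℕ} {Z : Type*} [Fintype Z] (f : Fin n → Z → ℝ) :
    ∑ z : Fin n → Z, ∏ j, f j (z j) = ∏ j, ∑ a, f j a := by
  rw [Finset.prod_univ_sum]; simp

lemma sum_prod_one {n : ℕ} {Z : Type*} [Fintype Z] (f : Fin n → Z → ℝ) (hf : ∀ j, ∑ a, f j a = 1)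
    (i : Fin n) (g : Z → ℝ) :
    ∑ z : Fin n → Z, (∏ j, f j (z j)) * g (z i) = ∑ a, f i a * g a := by
  have h1 : ∀ z : Fin n → Z, (∏ j, f j (z j)) * g (z i)
      = ∏ j, (f j (z j) * if j = i then g (z j) else 1) := by
    intro z
    rw [Finset.prod_mul_distrib]
    simp
  simp_rw [h1]
  rw [sum_prod_pi (fun j a => f j a * if j = i then g a else 1)]
  rw [Finset.prod_eq_single i]
  · simp
  · intro j _ hj
    simp [hj, hf j]
  · simp

lemma sum_prod_sum {n : ℕ} {Z : Type*} [Fintype Z] (f : Fin n → Z → ℝ) (hf : ∀ j, ∑ a, f j a = 1)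
    (g : Fin n → Z → ℝ) :
    ∑ z : Fin n → Z, (∏ j, f j (z j)) * ∑ i, g i (z i) = ∑ i, ∑ a, f i a * g i a := by
  simp_rw [Finset.mul_sum]
  rw [Finset.sum_comm]
  exact Finset.sum_congr rfl fun i _ => sum_prod_one f hf i (g i)

lemma klDiv_prod {n : ℕ} {Z : Type*} [Fintype Z] (P R : Fin n → Z → ℝ) (hP : ∀ j, IsDist (P j))
    (hAC : ∀ j, AbsCont (P j) (R j)) :
    klDiv (fun z : Fin n → Z => ∏ j, P j (z j)) (fun z => ∏ j, R j (z j))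
      = ∑ j, klDiv (P j) (R j) := by
  unfold klDiv
  rw [← sum_prod_sum P (fun j => (hP j).2) (fun j a => Real.log (P j a / R j a))]
  refine Finset.sum_congr rfl fun z _ => ?_
  by_cases hz : ∏ j, P j (z j) = 0
  · simp [hz]
  · have hz' := Finset.prod_ne_zero_iff.mp hz
    dsimp only
    rw [← Finset.prod_div_distrib, Real.log_prod]
    intro j hj
    exact div_ne_zero (hz' j hj) (fun h => hz' j hj (hAC j _ h))

lemma prod_isDist {n : ℕ} {Z : Type*} [Fintype Z] (P : Fin n → Z → ℝ) (hP : ∀ j, IsDist (P j)) :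
    IsDist (fun z : Fin n → Z => ∏ j, P j (z j)) := by
  refine ⟨fun z => Finset.prod_nonneg fun j _ => (hP j).1 _, ?_⟩
  rw [sum_prod_pi]; simp [(hP _).2]

/-! ### Second-order asymptotics of the divergence -/

lemma klFun_quot_tendsto :
    Tendsto (fun t : ℝ => if t = 0 then (1 / 2 : ℝ)
      else ((1 + t) * Real.log (1 + t) - t) / t ^ 2) (𝓝 0) (𝓝 (1 / 2)) := by
  rw [Metric.tendsto_nhds_nhds]
  intro ε hε
  refine ⟨min (1 / 2) (ε / 4), by positivity, fun t ht => ?_⟩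
  rw [Real.dist_eq, sub_zero] at ht
  have ht1 : |t| < 1 / 2 := lt_of_lt_of_le ht (min_le_left _ _)
  have ht2 : |t| < ε / 4 := lt_of_lt_of_le ht (min_le_right _ _)
  by_cases h0 : t = 0
  · simp [h0, hε]
  simp only [h0, if_false]
  have hlog := Real.abs_log_sub_add_sum_range_le (x := -t) (by rw [abs_neg]; linarith) 2
  simp only [Finset.sum_range_succ, Finset.sum_range_zero, sub_neg_eq_add, abs_neg] at hlog
  norm_num at hlog
  have hab := abs_pos.mpr h0
  have hl2 : |-t + t ^ 2 / 2 + Real.log (1 + t)| ≤ 2 * |t| ^ 3 := by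
    refine hlog.trans ?_
    rw [div_le_iff₀ (by linarith)]
    nlinarith [pow_pos hab 3]
  set e := -t + t ^ 2 / 2 + Real.log (1 + t) with he
  have hL : Real.log (1 + t) = e + t - t ^ 2 / 2 := by rw [he]; ring
  have h3 : ((1 + t) * Real.log (1 + t) - t) / t ^ 2 - 1 / 2 = ((1 + t) * e - t ^ 3 / 2) / t ^ 2 := by
    rw [hL]; field_simp; ring
  rw [Real.dist_eq, h3, abs_div, abs_of_pos (show (0 : ℝ) < t ^ 2 by positivity),
    div_lt_iff₀ (by positivity)]
  have h4 : |(1 + t) * e - t ^ 3 / 2| ≤ |1 + t| * |e| + |t| ^ 3 / 2 := by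
    refine (abs_sub _ _).trans ?_
    rw [abs_mul, abs_div, abs_pow]; norm_num
  have h5 : |1 + t| ≤ 3 / 2 := by
    rw [abs_le]; constructor <;> linarith [abs_le.mp ht1.le]
  have h6 : |1 + t| * |e| ≤ 3 / 2 * (2 * |t| ^ 3) :=
    mul_le_mul h5 hl2 (abs_nonneg _) (by norm_num)
  have h7 : |t| ^ 3 * 4 < ε * t ^ 2 := by
    rw [← sq_abs t]
    nlinarith [pow_pos hab 2]
  nlinarith [pow_pos hab 3]

/-- If `R i = Q + v i` with `v i / s i → g` and `s i → 0`, then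
`D(R i ‖ Q) / s i² → (1/2) ∑ g² / Q`. -/
lemma klDiv_asymp {ι Z : Type*} [Fintype Z] {l : Filter ι} (Q g : Z → ℝ) (hQ : IsDist Q)
    (R : ι → Z → ℝ) (hR : ∀ᶠ i in l, IsDist (R i)) (hAC : ∀ᶠ i in l, AbsCont (R i) Q) (s : ι → ℝ)
    (hs : ∀ᶠ i in l, 0 < s i) (hs0 : Tendsto s l (𝓝 0))
    (hv : ∀ z, Tendsto (fun i => (R i z - Q z) / s i) l (𝓝 (g z))) :
    Tendsto (fun i => klDiv (R i) Q / s i ^ 2) l (𝓝 ((∑ z, g z ^ 2 / Q z) / 2)) := by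
  set ψ : ℝ → ℝ := fun t : ℝ => if t = 0 then (1 / 2 : ℝ)
      else ((1 + t) * Real.log (1 + t) - t) / t ^ 2 with hψ
  have hψ2 : ∀ t, (1 + t) * Real.log (1 + t) = t + ψ t * t ^ 2 := by
    intro t
    by_cases h : t = 0
    · simp [h]
    · simp only [hψ, h, if_false]; field_simp; ring
  have hvt : ∀ z, Tendsto (fun i => (R i z - Q z) / Q z) l (𝓝 0) := by
    intro z
    have h1 : Tendsto (fun i => (R i z - Q z) / s i * s i / Q z) l (𝓝 (g z * 0 / Q z)) :=
      ((hv z).mul hs0).div_const _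
    simp only [mul_zero, zero_div] at h1
    refine h1.congr' ?_
    filter_upwards [hs] with i hi
    rw [div_mul_cancel₀ _ hi.ne']
  have hmain : Tendsto (fun i => ∑ z, ψ ((R i z - Q z) / Q z) *
      (((R i z - Q z) / s i) ^ 2 / Q z)) l (𝓝 (∑ z, 1 / 2 * (g z ^ 2 / Q z))) := by
    refine tendsto_finsetSum _ fun z _ => ?_
    exact (klFun_quot_tendsto.comp (hvt z)).mul (((hv z).pow 2).div_const _)
  have hlim : (∑ z, g z ^ 2 / Q z) / 2 = ∑ z, 1 / 2 * (g z ^ 2 / Q z) := by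
    rw [← Finset.mul_sum]; ring
  rw [hlim]
  refine hmain.congr' ?_
  filter_upwards [hs, hR, hAC] with i hi hRi hACi
  have hterm : ∀ z, R i z * Real.log (R i z / Q z)
      = (R i z - Q z) + ψ ((R i z - Q z) / Q z) * ((R i z - Q z) ^ 2 / Q z) := by
    intro z
    by_cases hq : Q z = 0
    · have := hACi z hq
      simp [hq, this]
    · have h1 : R i z = Q z * (1 + (R i z - Q z) / Q z) := by field_simp; ring
      have h2 : R i z / Q z = 1 + (R i z - Q z) / Q z := by field_simp; ring
      have h3 := hψ2 ((R i z - Q z) / Q z)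
      rw [h2]
      nth_rewrite 1 [h1]
      rw [mul_assoc, h3]
      field_simp
  unfold klDiv
  simp_rw [hterm]
  rw [Finset.sum_add_distrib, Finset.sum_sub_distrib, hRi.2, hQ.2, sub_self, zero_add,
    Finset.sum_div]
  refine Finset.sum_congr rfl fun z _ => ?_
  field_simp

/-! ### Compactness -/

lemma klDiv_eq_zero {Z : Type*} [Fintype Z] (P Q : Z → ℝ) (hP : IsDist P) (hQ : IsDist Q)
    (hAC : AbsCont P Q) (h : klDiv P Q ≤ 0) : ∀ z, P z = Q z := by
  have h1 : klDiv P Q = ∑ z, Q z * InformationTheory.klFun (P z / Q z) := by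
    have h2 : ∀ z, Q z * InformationTheory.klFun (P z / Q z)
        = P z * Real.log (P z / Q z) + Q z - P z := by
      intro z
      by_cases hq : Q z = 0
      · simp [hq, hAC z hq]
      · unfold InformationTheory.klFun; field_simp
    simp_rw [h2]
    rw [Finset.sum_sub_distrib, Finset.sum_add_distrib, hP.2, hQ.2]
    unfold klDiv; ring
  rw [h1] at h
  have hnn : ∀ z ∈ Finset.univ, 0 ≤ Q z * InformationTheory.klFun (P z / Q z) := fun z _ =>
    mul_nonneg (hQ.1 z) (InformationTheory.klFun_nonneg (div_nonneg (hP.1 z) (hQ.1 z)))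
  have h0 := (Finset.sum_eq_zero_iff_of_nonneg hnn).mp (le_antisymm h (Finset.sum_nonneg hnn))
  intro z
  have h3 := h0 z (Finset.mem_univ z)
  by_cases hq : Q z = 0
  · rw [hq, hAC z hq]
  · have h4 := (mul_eq_zero.mp h3).resolve_left hq
    rw [InformationTheory.klFun_eq_zero_iff (div_nonneg (hP.1 z) (hQ.1 z))] at h4
    field_simp at h4
    exact h4

lemma mix_isDist {T Z : Type*} [Fintype T] [Fintype Z] (V : T → Z → ℝ) (hV : ∀ t, IsDist (V t))
    (p : T → ℝ) (hp : ∀ t, 0 ≤ p t) (hp1 : ∑ t, p t = 1) :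
    IsDist (fun z => ∑ t, p t * V t z) := by
  refine ⟨fun z => Finset.sum_nonneg fun t _ => mul_nonneg (hp t) ((hV t).1 z), ?_⟩
  rw [Finset.sum_comm]
  simp_rw [← Finset.mul_sum, (hV _).2, mul_one, hp1]

lemma klDiv_compact {T Z : Type*} [Fintype T] [Fintype Z] (V : T → Z → ℝ)
    (hV : ∀ t, IsDist (V t)) (t₀ : T) (hAC : ∀ t, AbsCont (V t) (V t₀))
    (hNC : ¬ ∃ lam : T → ℝ, (∀ t, 0 ≤ lam t) ∧ lam t₀ = 0 ∧ (∑ t, lam t) = 1 ∧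
      ∀ z, V t₀ z = ∑ t, lam t * V t z) (η : ℝ) (hη : 0 < η) :
    ∃ γ > 0, ∀ p : T → ℝ, (∀ t, 0 ≤ p t) → (∑ t, p t = 1) →
      klDiv (fun z => ∑ t, p t * V t z) (V t₀) ≤ γ → 1 - p t₀ ≤ η := by
  have hACm : ∀ p : T → ℝ, AbsCont (fun z => ∑ t, p t * V t z) (V t₀) := by
    intro p z hz
    simp [fun t => hAC t z hz]
  set S : Set (T → ℝ) := stdSimplex ℝ T ∩ {p | η ≤ 1 - p t₀} with hS
  have hScomp : IsCompact S := (isCompact_stdSimplex ℝ T).inter_right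
    (isClosed_le continuous_const (by fun_prop))
  set f : (T → ℝ) → ℝ := fun p => klDiv (fun z => ∑ t, p t * V t z) (V t₀) with hf
  have hcont : Continuous f := by
    simp only [hf, klDiv]
    refine continuous_finsetSum _ fun z _ => ?_
    by_cases hz : V t₀ z = 0
    · simp [fun t => hAC t z hz]; fun_prop
    · have : ∀ p : T → ℝ, (∑ t, p t * V t z) * Real.log ((∑ t, p t * V t z) / V t₀ z)
          = V t₀ z * (((∑ t, p t * V t z) / V t₀ z) * Real.log ((∑ t, p t * V t z) / V t₀ z)) := by
        intro p; field_simp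
      simp_rw [this]
      refine continuous_const.mul (Real.continuous_mul_log.comp ?_)
      fun_prop
  by_cases hne : S.Nonempty
  · obtain ⟨p0, hp0, hmin⟩ := hScomp.exists_isMinOn hne hcont.continuousOn
    have hpos : 0 < f p0 := by
      by_contra hle
      push Not at hle
      have heq := klDiv_eq_zero _ _ (mix_isDist V hV p0 hp0.1.1 hp0.1.2) (hV t₀) (hACm p0) hle
      apply hNC
      have hq : 0 < 1 - p0 t₀ := lt_of_lt_of_le hη hp0.2
      refine ⟨fun t => if t = t₀ then 0 else p0 t / (1 - p0 t₀), ?_, by simp, ?_, ?_⟩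
      · intro t
        dsimp only
        split_ifs
        · exact le_rfl
        · exact div_nonneg (hp0.1.1 t) hq.le
      · have h1 := hp0.1.2
        rw [← Finset.add_sum_erase _ _ (Finset.mem_univ t₀)] at h1
        rw [← Finset.add_sum_erase _ _ (Finset.mem_univ t₀)]
        simp only [if_true, zero_add]
        rw [Finset.sum_congr rfl (g := fun t => p0 t / (1 - p0 t₀))
          (fun t ht => by simp [Finset.ne_of_mem_erase ht]), ← Finset.sum_div,
          div_eq_one_iff_eq hq.ne']
        linarith
      · intro z
        have h1 := heq z
        rw [← Finset.add_sum_erase _ _ (Finset.mem_univ t₀)] at h1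
        rw [← Finset.add_sum_erase _ _ (Finset.mem_univ t₀)]
        simp only [if_true, zero_mul, zero_add]
        rw [Finset.sum_congr rfl (g := fun t => (p0 t * V t z) / (1 - p0 t₀))
          (fun t ht => by simp [Finset.ne_of_mem_erase ht]; ring), ← Finset.sum_div,
          eq_div_iff hq.ne']
        linarith
    refine ⟨f p0 / 2, by positivity, fun p hp hp1 hle => ?_⟩
    by_contra hlt
    push Not at hlt
    have := hmin (show p ∈ S from ⟨⟨hp, hp1⟩, hlt.le⟩)
    simp only [Set.mem_ofPred_eq] at this
    change f p ≤ _ at hle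
    linarith
  · refine ⟨1, one_pos, fun p hp hp1 _ => ?_⟩
    by_contra hlt
    push Not at hlt
    exact hne ⟨p, ⟨hp, hp1⟩, hlt.le⟩

/-! ### Converse: one-shot bounds -/

/-- Marginal output distribution at position `j`. -/
def qh {K n : ℕ} {Z : Type*} (Wz : (Fin K → Bool) → Z → ℝ) (M L : Fin K → ℕ)
    (enc : ∀ k, Fin (M k) × Fin (L k) → Fin n → Bool) (j : Fin n) (z : Z) : ℝ :=
  av (fun ω : ∀ k, Fin (M k) × Fin (L k) => Wz (fun k => enc k (ω k) j) z)

/-- Probability that user `k` sends a one at position `j`. -/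
def muj {K n : ℕ} (M L : Fin K → ℕ)
    (enc : ∀ k, Fin (M k) × Fin (L k) → Fin n → Bool) (k : Fin K) (j : Fin n) : ℝ :=
  av (fun a : Fin (M k) × Fin (L k) => ind (enc k a j))

lemma muj_nonneg {K n : ℕ} (M L : Fin K → ℕ)
    (enc : ∀ k, Fin (M k) × Fin (L k) → Fin n → Bool) (k : Fin K) (j : Fin n) :
    0 ≤ muj M L enc k j := av_nonneg fun _ => ind_nonneg _

lemma Qhat_eq_av {K n : ℕ} {Z : Type*} [Fintype Z] (Wz : (Fin K → Bool) → Z → ℝ)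
    (M L : Fin K → ℕ) (enc : ∀ k, Fin (M k) × Fin (L k) → Fin n → Bool) (z : Fin n → Z) :
    Qhat Wz M L enc z
      = av (fun ω : ∀ k, Fin (M k) × Fin (L k) => ∏ j, Wz (fun k => enc k (ω k) j) (z j)) := by
  unfold Qhat prodChannel
  exact av_code M L (fun ω => ∏ j, Wz (fun k => enc k (ω k) j) (z j))

lemma pair_nonempty {a b : ℕ} (ha : 0 < a) (hb : 0 < b) : Nonempty (Fin a × Fin b) :=
  ⟨(⟨0, ha⟩, ⟨0, hb⟩)⟩

lemma Qhat_marg {K n : ℕ} {Z : Type*} [Fintype Z] (Wz : (Fin K → Bool) → Z → ℝ)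
    (hWz : ∀ x, IsDist (Wz x))
    (M L : Fin K → ℕ) (enc : ∀ k, Fin (M k) × Fin (L k) → Fin n → Bool) (g : Fin n → Z → ℝ) :
    ∑ z, Qhat Wz M L enc z * ∑ j, g j (z j) = ∑ j, ∑ a, qh Wz M L enc j a * g j a := by
  simp_rw [Qhat_eq_av, qh, ← av_mul_right]
  rw [← av_sum]
  simp_rw [← av_sum]
  congr 1
  funext ω
  exact sum_prod_sum (fun j => Wz (fun k => enc k (ω k) j)) (fun j => (hWz _).2) g

lemma qh_isDist {K n : ℕ} {Z : Type*} [Fintype Z] (Wz : (Fin K → Bool) → Z → ℝ)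
    (hWz : ∀ x, IsDist (Wz x)) (M L : Fin K → ℕ) (hM : ∀ k, 0 < M k) (hL : ∀ k, 0 < L k)
    (enc : ∀ k, Fin (M k) × Fin (L k) → Fin n → Bool) (j : Fin n) :
    IsDist (qh Wz M L enc j) := by
  have : ∀ k, Nonempty (Fin (M k) × Fin (L k)) := fun k => pair_nonempty (hM k) (hL k)
  refine ⟨fun z => av_nonneg fun ω => (hWz _).1 z, ?_⟩
  unfold qh
  rw [← av_sum]
  simp_rw [(hWz _).2]
  exact av_const 1

lemma Qhat_isDist {K n : ℕ} {Z : Type*} [Fintype Z] (Wz : (Fin K → Bool) → Z → ℝ)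
    (hWz : ∀ x, IsDist (Wz x)) (M L : Fin K → ℕ) (hM : ∀ k, 0 < M k) (hL : ∀ k, 0 < L k)
    (enc : ∀ k, Fin (M k) × Fin (L k) → Fin n → Bool) :
    IsDist (Qhat Wz M L enc) := by
  have : ∀ k, Nonempty (Fin (M k) × Fin (L k)) := fun k => pair_nonempty (hM k) (hL k)
  constructor
  · intro z
    rw [Qhat_eq_av]
    exact av_nonneg fun ω => Finset.prod_nonneg fun j _ => (hWz _).1 _
  · simp_rw [Qhat_eq_av]
    rw [← av_sum]
    simp_rw [fun ω : ∀ k, Fin (M k) × Fin (L k) =>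
      (prod_isDist (fun j => Wz (fun k => enc k (ω k) j)) (fun j => hWz _)).2]
    exact av_const 1

lemma qh_absCont {K n : ℕ} {Z : Type*} (Wz : (Fin K → Bool) → Z → ℝ)
    (hAC : ∀ x, AbsCont (Wz x) (Wz (xU ∅))) (M L : Fin K → ℕ)
    (enc : ∀ k, Fin (M k) × Fin (L k) → Fin n → Bool) (j : Fin n) :
    AbsCont (qh Wz M L enc j) (Wz (xU ∅)) := by
  intro z hz
  simp [qh, av, fun x => hAC x z hz]

lemma delta_ge {K n : ℕ} {Z : Type*} [Fintype Z] (Wz : (Fin K → Bool) → Z → ℝ)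
    (hWz : ∀ x, IsDist (Wz x)) (hAC : ∀ x, AbsCont (Wz x) (Wz (xU ∅)))
    (M L : Fin K → ℕ) (hM : ∀ k, 0 < M k) (hL : ∀ k, 0 < L k)
    (enc : ∀ k, Fin (M k) × Fin (L k) → Fin n → Bool) (R : Fin n → Z → ℝ)
    (hR : ∀ j, IsDist (R j)) (hqR : ∀ j, AbsCont (qh Wz M L enc j) (R j)) :
    ∑ j, ∑ a, qh Wz M L enc j a * Real.log (R j a / Wz (xU ∅) a) ≤ deltaN Wz M L enc := by
  have hpos : ∀ z : Fin n → Z, Qhat Wz M L enc z ≠ 0 →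
      ∀ j, 0 < R j (z j) ∧ 0 < Wz (xU ∅) (z j) := by
    intro z hz j
    rw [Qhat_eq_av] at hz
    have hex : ∃ ω : ∀ k, Fin (M k) × Fin (L k), ∏ j, Wz (fun k => enc k (ω k) j) (z j) ≠ 0 := by
      by_contra hcon
      push Not at hcon
      apply hz
      simp [av, hcon]
    obtain ⟨ω, hω⟩ := hex
    have hj := Finset.prod_ne_zero_iff.mp hω j (Finset.mem_univ j)
    have hq : 0 < qh Wz M L enc j (z j) := av_pos_of (fun ω => (hWz _).1 _) ω hj
    refine ⟨lt_of_le_of_ne ((hR j).1 _) fun h => hq.ne' (hqR j _ h.symm),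
      lt_of_le_of_ne ((hWz _).1 _) fun h => hj (hAC _ _ h.symm)⟩
  have hmain := klDiv_ge (Qhat Wz M L enc) (fun z : Fin n → Z => ∏ j, Wz (xU ∅) (z j))
    (fun z => ∏ j, (R j (z j) / Wz (xU ∅) (z j))) (Qhat_isDist Wz hWz M L hM hL enc)
    (fun z => Finset.prod_nonneg fun j _ => (hWz _).1 _)
    (by
      intro z hz
      by_contra hne
      exact Finset.prod_ne_zero_iff.mpr (fun j _ => (hpos z hne j).2.ne') hz)
    (fun z hz => Finset.prod_pos fun j _ => div_pos (hpos z hz j).1 (hpos z hz j).2)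
    (fun z => mul_nonneg (Finset.prod_nonneg fun j _ => (hWz _).1 _)
      (Finset.prod_nonneg fun j _ => div_nonneg ((hR j).1 _) ((hWz _).1 _)))
    (by
      rw [← (prod_isDist R hR).2]
      refine Finset.sum_le_sum fun z _ => ?_
      rw [← Finset.prod_mul_distrib]
      refine Finset.prod_le_prod
        (fun j _ => mul_nonneg ((hWz _).1 _) (div_nonneg ((hR j).1 _) ((hWz _).1 _)))
        fun j _ => ?_
      by_cases h : Wz (xU ∅) (z j) = 0
      · rw [h, zero_mul]; exact (hR j).1 _
      · rw [mul_div_cancel₀ _ h])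
  unfold deltaN
  refine le_trans (le_of_eq ?_) hmain
  rw [← Qhat_marg Wz hWz M L enc (fun j a => Real.log (R j a / Wz (xU ∅) a))]
  refine Finset.sum_congr rfl fun z _ => ?_
  by_cases hz : Qhat Wz M L enc z = 0
  · simp [hz]
  · rw [Real.log_prod]
    intro j _
    exact (div_pos (hpos z hz j).1 (hpos z hz j).2).ne'

lemma log_self_div (a : ℝ) : Real.log (a / a) = 0 := by
  by_cases h : a = 0
  · simp [h]
  · simp [h]

lemma delta_ge_single {K n : ℕ} {Z : Type*} [Fintype Z] (Wz : (Fin K → Bool) → Z → ℝ)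
    (hWz : ∀ x, IsDist (Wz x)) (hAC : ∀ x, AbsCont (Wz x) (Wz (xU ∅)))
    (M L : Fin K → ℕ) (hM : ∀ k, 0 < M k) (hL : ∀ k, 0 < L k)
    (enc : ∀ k, Fin (M k) × Fin (L k) → Fin n → Bool) (j : Fin n) :
    klDiv (qh Wz M L enc j) (Wz (xU ∅)) ≤ deltaN Wz M L enc := by
  have h := delta_ge Wz hWz hAC M L hM hL enc
    (fun i => if i = j then qh Wz M L enc j else Wz (xU ∅))
    (by
      intro i
      by_cases h : i = j
      · simpa [h] using qh_isDist Wz hWz M L hM hL enc j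
      · simpa [h] using hWz _)
    (by
      intro i
      by_cases h : i = j
      · subst h; simp only [if_true]; exact fun z hz => hz
      · simp only [h, if_false]; exact qh_absCont Wz hAC M L enc i)
  rw [Finset.sum_eq_single j] at h
  · simpa [klDiv] using h
  · intro i _ hij
    simp [hij]
  · simp

lemma delta_ge_avg {K n : ℕ} {Z : Type*} [Fintype Z] (Wz : (Fin K → Bool) → Z → ℝ)
    (hWz : ∀ x, IsDist (Wz x)) (hAC : ∀ x, AbsCont (Wz x) (Wz (xU ∅)))
    (M L : Fin K → ℕ) (hM : ∀ k, 0 < M k) (hL : ∀ k, 0 < L k)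
    (enc : ∀ k, Fin (M k) × Fin (L k) → Fin n → Bool) (hn : 0 < n) :
    IsDist (fun z => (∑ j, qh Wz M L enc j z) / n) ∧
    n * klDiv (fun z => (∑ j, qh Wz M L enc j z) / n) (Wz (xU ∅)) ≤ deltaN Wz M L enc := by
  have hn' : (0 : ℝ) < n := by exact_mod_cast hn
  have hq := qh_isDist Wz hWz M L hM hL enc
  have hd : IsDist (fun z => (∑ j, qh Wz M L enc j z) / n) := by
    refine ⟨fun z => div_nonneg (Finset.sum_nonneg fun j _ => (hq j).1 z) hn'.le, ?_⟩
    rw [← Finset.sum_div, Finset.sum_comm]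
    simp_rw [(hq _).2]
    simp [hn'.ne']
  refine ⟨hd, ?_⟩
  have h := delta_ge Wz hWz hAC M L hM hL enc
    (fun _ z => (∑ j, qh Wz M L enc j z) / n) (fun _ => hd)
    (by
      intro j z hz
      have h1 : ∑ j, qh Wz M L enc j z = 0 := by
        rcases div_eq_zero_iff.mp hz with h | h
        · exact h
        · exact absurd h hn'.ne'
      exact (Finset.sum_eq_zero_iff_of_nonneg fun j _ => (hq j).1 z).mp h1 j (Finset.mem_univ j))
  refine le_trans (le_of_eq ?_) h
  rw [Finset.sum_comm]
  unfold klDiv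
  rw [Finset.mul_sum]
  refine Finset.sum_congr rfl fun z _ => ?_
  rw [← Finset.sum_mul]
  field_simp

/-- Smallness of the per-letter weights. -/
lemma mu_le_of_klDiv {K n : ℕ} {Z : Type*} [Fintype Z] (Wz : (Fin K → Bool) → Z → ℝ)
    (M L : Fin K → ℕ) (hM : ∀ k, 0 < M k) (hL : ∀ k, 0 < L k)
    (enc : ∀ k, Fin (M k) × Fin (L k) → Fin n → Bool) (η γ : ℝ)
    (hγ : ∀ p : Finset (Fin K) → ℝ, (∀ t, 0 ≤ p t) → (∑ t, p t = 1) →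
      klDiv (fun z => ∑ t, p t * Wz (xU t) z) (Wz (xU ∅)) ≤ γ → 1 - p ∅ ≤ η)
    (j : Fin n) (hj : klDiv (qh Wz M L enc j) (Wz (xU ∅)) ≤ γ) :
    ∑ k, muj M L enc k j ≤ K * η := by
  have : ∀ k, Nonempty (Fin (M k) × Fin (L k)) := fun k => pair_nonempty (hM k) (hL k)
  set p : Finset (Fin K) → ℝ := fun T =>
    av (fun ω : ∀ k, Fin (M k) × Fin (L k) => if xU T = (fun k => enc k (ω k) j) then (1 : ℝ) else 0)
    with hp
  have hsum : ∀ (g : (Fin K → Bool) → ℝ) (x : Fin K → Bool),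
      ∑ T : Finset (Fin K), (if xU T = x then (1 : ℝ) else 0) * g (xU T) = g x := by
    intro g x
    obtain ⟨U, hU⟩ := exists_xU x
    rw [Finset.sum_eq_single U]
    · simp [hU]
    · intro T _ hT
      have : xU T ≠ x := fun h => hT (xU_inj (h.trans hU.symm))
      simp [this]
    · simp
  have h1 : ∑ T, p T = 1 := by
    simp only [hp]
    rw [← av_sum]
    have : ∀ ω : ∀ k, Fin (M k) × Fin (L k), ∑ T : Finset (Fin K),
        (if xU T = (fun k => enc k (ω k) j) then (1 : ℝ) else 0) = 1 := by
      intro ω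
      simpa using hsum (fun _ => 1) (fun k => enc k (ω k) j)
    simp_rw [this]
    exact av_const 1
  have h2 : (fun z => ∑ t, p t * Wz (xU t) z) = qh Wz M L enc j := by
    funext z
    simp only [hp, qh]
    simp_rw [← av_mul_right]
    rw [← av_sum]
    congr 1
    funext ω
    exact hsum (fun x => Wz x z) _
  have h3 := hγ p (fun T => av_nonneg fun ω => by split_ifs <;> norm_num) h1 (by rw [h2]; exact hj)
  have h4 : ∀ k ∈ Finset.univ, muj M L enc k j ≤ η := by
    intro k _
    refine le_trans ?_ h3
    have h5 : (1 : ℝ) - p ∅ = av (fun ω : ∀ k, Fin (M k) × Fin (L k) =>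
        1 - if xU ∅ = (fun k => enc k (ω k) j) then (1 : ℝ) else 0) := by
      rw [av_sub, av_const]
    rw [h5]
    unfold muj
    rw [← av_coord (Ω := fun k => Fin (M k) × Fin (L k)) k (fun a => ind (enc k a j))]
    refine av_mono fun ω => ?_
    by_cases h : xU ∅ = (fun k => enc k (ω k) j)
    · have := congrFun h k
      simp [xU] at this
      simp [h, ind, this]
    · simp only [h, if_false, sub_zero]; exact ind_le_one _
  refine (Finset.sum_le_sum h4).trans ?_
  simp

/-! ### Converse: sharp Fano-type inequality -/

lemma klDiv_le_of_mul_le {Y : Type*} [Fintype Y] (P T : Y → ℝ) (hP : IsDist P) (c : ℝ)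
    (hc : 0 < c) (h : ∀ y, c * P y ≤ T y) : klDiv P T ≤ -Real.log c := by
  have key : ∀ y, P y * Real.log (P y / T y) ≤ P y * (-Real.log c) := by
    intro y
    by_cases hy : P y = 0
    · simp [hy]
    · have hp : 0 < P y := lt_of_le_of_ne (hP.1 y) (Ne.symm hy)
      have ht : 0 < T y := lt_of_lt_of_le (by positivity) (h y)
      refine mul_le_mul_of_nonneg_left ?_ hp.le
      rw [← Real.log_inv]
      refine Real.log_le_log (by positivity) ?_
      rw [div_le_iff₀ ht, inv_mul_eq_div, le_div_iff₀ hc]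
      linarith [h y]
  refine (Finset.sum_le_sum fun y _ => key y).trans ?_
  rw [← Finset.sum_mul, hP.2, one_mul]

/-- Auxiliary channel that ignores the input of user `k`. -/
def auxT {K : ℕ} {Y : Type*} (Wy : (Fin K → Bool) → Y → ℝ) (k : Fin K) (ε : ℝ)
    (x : Fin K → Bool) (y : Y) : ℝ :=
  if ∀ i, i ≠ k → x i = false then Wy (xU ∅) y
  else (1 - ε) * Wy (Function.update x k false) y + ε * Wy (Function.update x k true) y

lemma auxT_congr {K : ℕ} {Y : Type*} (Wy : (Fin K → Bool) → Y → ℝ) (k : Fin K) (ε : ℝ)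
    (x x' : Fin K → Bool) (h : ∀ i, i ≠ k → x i = x' i) : auxT Wy k ε x = auxT Wy k ε x' := by
  have h1 : ∀ b, Function.update x k b = Function.update x' k b := by
    intro b; funext i
    by_cases hi : i = k
    · subst hi; simp
    · simp [hi, h i hi]
  have h2 : (∀ i, i ≠ k → x i = false) ↔ (∀ i, i ≠ k → x' i = false) :=
    forall_congr' fun i => forall_congr' fun hi => by rw [h i hi]
  funext y
  unfold auxT
  simp only [h1, h2]

lemma auxT_isDist {K : ℕ} {Y : Type*} [Fintype Y] (Wy : (Fin K → Bool) → Y → ℝ)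
    (hWy : ∀ x, IsDist (Wy x)) (k : Fin K) (ε : ℝ) (hε : 0 < ε) (hε1 : ε < 1)
    (x : Fin K → Bool) : IsDist (auxT Wy k ε x) := by
  by_cases h : ∀ i, i ≠ k → x i = false
  · have : auxT Wy k ε x = Wy (xU ∅) := by funext y; simp only [auxT]; rw [if_pos h]
    rw [this]; exact hWy _
  · have : auxT Wy k ε x = fun y => (1 - ε) * Wy (Function.update x k false) y
        + ε * Wy (Function.update x k true) y := by funext y; simp only [auxT]; rw [if_neg h]
    rw [this]
    refine ⟨fun y => add_nonneg (mul_nonneg (by linarith) ((hWy _).1 y))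
      (mul_nonneg hε.le ((hWy _).1 y)), ?_⟩
    rw [Finset.sum_add_distrib, ← Finset.mul_sum, ← Finset.mul_sum, (hWy _).2, (hWy _).2]
    ring

lemma single_of_others {K : ℕ} (k : Fin K) (x : Fin K → Bool) (h : ∀ i, i ≠ k → x i = false) :
    x = if x k then xU {k} else xU ∅ := by
  funext i
  by_cases hi : i = k
  · subst hi
    cases hx : x i <;> simp [xU]
  · rw [h i hi]
    cases hx : x k <;> simp [xU, hi]

lemma auxT_bound {K : ℕ} {Y : Type*} [Fintype Y] (Wy : (Fin K → Bool) → Y → ℝ)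
    (hWy : ∀ x, IsDist (Wy x)) (k : Fin K)
    (hAC : AbsCont (Wy (xU {k})) (Wy (xU ∅))) (ε : ℝ) (hε : 0 < ε) (hε1 : ε < 1)
    (x : Fin K → Bool) :
    AbsCont (Wy x) (auxT Wy k ε x) ∧
    klDiv (Wy x) (auxT Wy k ε x) ≤ ind (x k) * klDiv (Wy (xU {k})) (Wy (xU ∅))
      + (-Real.log (1 - ε)) * ∑ i ∈ Finset.univ.erase k, ind (x i)
      + (-Real.log ε) * ∑ i ∈ Finset.univ.erase k, ind (x i) * ind (x k) := by
  have hD : 0 ≤ klDiv (Wy (xU {k})) (Wy (xU ∅)) := klDiv_nonneg' _ _ (hWy _) (hWy _) hAC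
  have hl1 : 0 ≤ -Real.log (1 - ε) := by
    have := Real.log_nonpos (show 0 ≤ 1 - ε by linarith) (by linarith); linarith
  have hl2 : 0 ≤ -Real.log ε := by
    have := Real.log_nonpos hε.le hε1.le; linarith
  have hs1 : 0 ≤ ∑ i ∈ Finset.univ.erase k, ind (x i) :=
    Finset.sum_nonneg fun i _ => ind_nonneg _
  have hs2 : 0 ≤ ∑ i ∈ Finset.univ.erase k, ind (x i) * ind (x k) :=
    Finset.sum_nonneg fun i _ => mul_nonneg (ind_nonneg _) (ind_nonneg _)
  by_cases h : ∀ i, i ≠ k → x i = false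
  · have hT : auxT Wy k ε x = Wy (xU ∅) := by funext y; simp only [auxT]; rw [if_pos h]
    rw [hT]
    have hx := single_of_others k x h
    have hr := add_nonneg (mul_nonneg hl1 hs1) (mul_nonneg hl2 hs2)
    cases hxk : x k
    · have hx' : x = xU ∅ := by rw [hx]; simp [hxk]
      constructor
      · rw [hx']; exact fun z hz => hz
      · have h0 : klDiv (Wy x) (Wy (xU ∅)) = 0 := by
          rw [hx']; simp [klDiv]
        rw [h0]
        rw [hxk] at hr
        have : ind false = 0 := by simp [ind]
        rw [this] at hr ⊢
        linarith
    · have hx' : x = xU {k} := by rw [hx]; simp [hxk]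
      constructor
      · rw [hx']; exact hAC
      · rw [hxk] at hr
        have : ind true = 1 := by simp [ind]
        rw [this] at hr ⊢
        have h0 : klDiv (Wy x) (Wy (xU ∅)) = klDiv (Wy (xU {k})) (Wy (xU ∅)) := by rw [hx']
        rw [h0]
        linarith
  · have hT : ∀ y, auxT Wy k ε x y = (1 - ε) * Wy (Function.update x k false) y
        + ε * Wy (Function.update x k true) y := by
      intro y; simp only [auxT]; rw [if_neg h]
    push Not at h
    obtain ⟨i, hik, hi⟩ := h
    have hi' : x i = true := by simpa using hi
    have hxu : Function.update x k (x k) = x := by simp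
    have hone : 1 ≤ ∑ i ∈ Finset.univ.erase k, ind (x i) := by
      have := Finset.single_le_sum (f := fun i => ind (x i)) (s := Finset.univ.erase k)
        (fun i _ => ind_nonneg _) (show i ∈ Finset.univ.erase k by simp [hik])
      simpa [ind, hi'] using this
    cases hxk : x k
    · rw [hxk] at hxu hs2
      have hle : ∀ y, (1 - ε) * Wy x y ≤ auxT Wy k ε x y := by
        intro y
        rw [hT, hxu]
        have := mul_nonneg hε.le ((hWy (Function.update x k true)).1 y)
        linarith
      constructor
      · intro y hy
        have h1 := hle y
        rw [hy] at h1
        have h2 := (hWy x).1 y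
        nlinarith
      · have h1 := klDiv_le_of_mul_le (Wy x) _ (hWy x) (1 - ε) (by linarith) hle
        have h3 : ind false * klDiv (Wy (xU {k})) (Wy (xU ∅)) = 0 := by simp [ind]
        rw [h3]
        nlinarith [mul_nonneg hl2 hs2]
    · rw [hxk] at hxu
      have hle : ∀ y, ε * Wy x y ≤ auxT Wy k ε x y := by
        intro y
        rw [hT, hxu]
        have := mul_nonneg (show 0 ≤ 1 - ε by linarith) ((hWy (Function.update x k false)).1 y)
        linarith
      constructor
      · intro y hy
        have h1 := hle y
        rw [hy] at h1
        have h2 := (hWy x).1 y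
        nlinarith
      · have h1 := klDiv_le_of_mul_le (Wy x) _ (hWy x) ε hε hle
        have h3 : ind true = 1 := by simp [ind]
        simp only [h3, mul_one, one_mul]
        nlinarith [mul_nonneg hl1 hs1]

lemma av_prod_type {A B : Type*} [Fintype A] [Fintype B] (f : A → B → ℝ) :
    av (fun p : A × B => f p.1 p.2) = av (fun a => av (fun b => f a b)) := by
  unfold av
  rw [Fintype.sum_prod_type]
  simp only [← Finset.mul_sum, Fintype.card_prod]
  push_cast
  rw [mul_inv, mul_assoc]

lemma fano {K n : ℕ} {Y : Type*} [Fintype Y] (Wy : (Fin K → Bool) → Y → ℝ)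
    (hWy : ∀ x, IsDist (Wy x)) (k : Fin K)
    (hAC : AbsCont (Wy (xU {k})) (Wy (xU ∅))) (ε : ℝ) (hε : 0 < ε) (hε1 : ε < 1)
    (θ : ℝ) (hθ : 0 < θ)
    (M L : Fin K → ℕ) (hM : ∀ k, 0 < M k) (hL : ∀ k, 0 < L k)
    (enc : ∀ k, Fin (M k) × Fin (L k) → Fin n → Bool)
    (dec : (Fin n → Y) → (∀ k, Fin (L k)) → ∀ k, Fin (M k)) :
    (1 - Pe Wy M L enc dec) * Real.log (θ * M k) - Real.log (1 + θ) ≤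
      ∑ j, (muj M L enc k j * klDiv (Wy (xU {k})) (Wy (xU ∅))
        + (-Real.log (1 - ε)) * ∑ i ∈ Finset.univ.erase k, muj M L enc i j
        + (-Real.log ε) * ∑ i ∈ Finset.univ.erase k, muj M L enc i j * muj M L enc k j) := by
  have hne : ∀ k, Nonempty (Fin (M k) × Fin (L k)) := fun k => pair_nonempty (hM k) (hL k)
  have hneM : ∀ k, Nonempty (Fin (M k)) := fun k => ⟨⟨0, hM k⟩⟩
  have hneL : ∀ k, Nonempty (Fin (L k)) := fun k => ⟨⟨0, hL k⟩⟩
  have hMk : (0 : ℝ) < M k := by exact_mod_cast hM k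
  let A := (∀ k, Fin (M k)) × (∀ k, Fin (L k))
  let X : A → Fin n → Fin K → Bool := fun a j k => enc k (a.1 k, a.2 k) j
  let c : ℝ := (Fintype.card A : ℝ)⁻¹
  have hc : 0 < c := by
    have : (0 : ℝ) < Fintype.card A := by exact_mod_cast Fintype.card_pos
    positivity
  have hcav : ∀ f : A → (Fin n → Y) → ℝ,
      ∑ p : A × (Fin n → Y), c * f p.1 p.2 = av (fun a => ∑ y, f a y) := by
    intro f
    rw [← Finset.mul_sum, Fintype.sum_prod_type]
    rfl
  let T : (Fin K → Bool) → Y → ℝ := auxT Wy k ε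
  have hT : ∀ x, IsDist (T x) := auxT_isDist Wy hWy k ε hε hε1
  have hTb := auxT_bound Wy hWy k hAC ε hε hε1
  let P : A × (Fin n → Y) → ℝ := fun p => c * ∏ j, Wy (X p.1 j) (p.2 j)
  let R : A × (Fin n → Y) → ℝ := fun p => c * ∏ j, T (X p.1 j) (p.2 j)
  let G : A × (Fin n → Y) → ℝ := fun p =>
    if dec p.2 p.1.2 = p.1.1 then θ * M k / (1 + θ) else 1 / (1 + θ)
  have hP : IsDist P := by
    refine ⟨fun p => mul_nonneg hc.le (Finset.prod_nonneg fun j _ => (hWy _).1 _), ?_⟩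
    refine (hcav (fun a y => ∏ j, Wy (X a j) (y j))).trans ?_
    simp_rw [fun a => (prod_isDist (fun j => Wy (X a j)) (fun j => hWy _)).2]
    exact av_const 1
  have hGpos : ∀ p, 0 < G p := by
    intro p
    simp only [G]
    split_ifs <;> positivity
  have hR0 : ∀ p, 0 ≤ R p := fun p =>
    mul_nonneg hc.le (Finset.prod_nonneg fun j _ => (hT _).1 _)
  have hPR : AbsCont P R := by
    intro p hp
    rcases mul_eq_zero.mp hp with h | h
    · exact absurd h hc.ne'
    · obtain ⟨j, hj, h0⟩ := Finset.prod_eq_zero_iff.mp h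
      simp only [P]
      rw [Finset.prod_eq_zero hj ((hTb _).1 _ h0), mul_zero]
  -- correct decoding probability under the auxiliary measure
  have hRA : av (fun a : A => ∑ y, (∏ j, T (X a j) (y j)) *
      (if dec y a.2 = a.1 then (1 : ℝ) else 0)) ≤ 1 / M k := by
    rw [av_prod_type (fun (m : ∀ k, Fin (M k)) (l : ∀ k, Fin (L k)) =>
      ∑ y, (∏ j, T (X (m, l) j) (y j)) * (if dec y l = m then (1 : ℝ) else 0)), av_comm]
    rw [← av_const (Ω := ∀ k, Fin (L k)) (1 / (M k : ℝ))]
    refine av_mono fun l => ?_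
    rw [av_update k, ← av_const (Ω := ∀ k, Fin (M k)) (1 / (M k : ℝ))]
    refine av_mono fun m => ?_
    have hinv : ∀ a : Fin (M k), ∀ j, T (X (Function.update m k a, l) j) = T (X (m, l) j) := by
      intro a j
      refine auxT_congr Wy k ε _ _ fun i hi => ?_
      simp only [X]
      rw [Function.update_of_ne hi]
    simp_rw [hinv]
    rw [av_sum]
    have hy : ∀ y ∈ (Finset.univ : Finset (Fin n → Y)),
        av (fun a : Fin (M k) => (∏ j, T (X (m, l) j) (y j)) *
          (if dec y l = Function.update m k a then (1 : ℝ) else 0))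
        ≤ (∏ j, T (X (m, l) j) (y j)) * (1 / M k) := by
      intro y _
      rw [av_mul_left]
      refine mul_le_mul_of_nonneg_left ?_ (Finset.prod_nonneg fun j _ => (hT _).1 _)
      unfold av
      rw [Fintype.card_fin, one_div]
      refine mul_le_of_le_one_right (by positivity) ?_
      have hle : ∑ a : Fin (M k), (if dec y l = Function.update m k a then (1 : ℝ) else 0)
          ≤ ∑ a : Fin (M k), (if a = dec y l k then (1 : ℝ) else 0) := by
        refine Finset.sum_le_sum fun a _ => ?_
        by_cases h : dec y l = Function.update m k a
        · have : a = dec y l k := by rw [h]; simp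
          rw [if_pos h, if_pos this]
        · rw [if_neg h]; split_ifs <;> norm_num
      refine hle.trans ?_
      simp
    refine (Finset.sum_le_sum hy).trans ?_
    rw [← Finset.sum_mul, (prod_isDist (fun j => T (X (m, l) j)) (fun j => hT _)).2, one_mul]
  have hRG : ∑ p, R p * G p ≤ 1 := by
    have h1 : ∑ p, R p * G p = av (fun a : A => ∑ y : Fin n → Y, (∏ j, T (X a j) (y j)) *
        (if dec y a.2 = a.1 then θ * M k / (1 + θ) else 1 / (1 + θ))) := by
      rw [← hcav]
      refine Finset.sum_congr rfl fun p _ => ?_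
      simp only [R, G]; ring
    rw [h1]
    have h2 : ∀ a : A, ∑ y, (∏ j, T (X a j) (y j)) *
        (if dec y a.2 = a.1 then θ * M k / (1 + θ) else 1 / (1 + θ))
        ≤ θ * M k / (1 + θ) * (∑ y, (∏ j, T (X a j) (y j)) *
          (if dec y a.2 = a.1 then (1 : ℝ) else 0)) + 1 / (1 + θ) := by
      intro a
      have h3 : (1 : ℝ) / (1 + θ) = ∑ y : Fin n → Y, (∏ j, T (X a j) (y j)) * (1 / (1 + θ)) := by
        rw [← Finset.sum_mul, (prod_isDist (fun j => T (X a j)) (fun j => hT _)).2, one_mul]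
      refine le_of_le_of_eq ?_ (congrArg _ h3.symm)
      rw [Finset.mul_sum, ← Finset.sum_add_distrib]
      refine Finset.sum_le_sum fun y _ => ?_
      have h4 : 0 ≤ ∏ j, T (X a j) (y j) := Finset.prod_nonneg fun j _ => (hT _).1 _
      have h5 : 0 ≤ (∏ j, T (X a j) (y j)) * (1 / (1 + θ)) := by positivity
      split_ifs
      · linarith
      · linarith
    refine (av_mono h2).trans ?_
    rw [av_add, av_mul_left, av_const]
    have h6 : 0 ≤ θ * M k / (1 + θ) := by positivity
    have h7 := mul_le_mul_of_nonneg_left hRA h6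
    have h8 : θ * M k / (1 + θ) * (1 / M k) + 1 / (1 + θ) = 1 := by field_simp; ring
    linarith
  have hDV := klDiv_ge P R G hP hR0 hPR (fun p _ => hGpos p)
    (fun p => mul_nonneg (hR0 p) (hGpos p).le) hRG
  -- left side
  have hleft : ∑ p, P p * Real.log (G p)
      = (1 - Pe Wy M L enc dec) * Real.log (θ * M k) - Real.log (1 + θ) := by
    have hPe : Pe Wy M L enc dec = av (fun a : A => ∑ y : Fin n → Y, (∏ j, Wy (X a j) (y j)) *
        (if dec y a.2 = a.1 then (0 : ℝ) else 1)) := by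
      rw [av_prod_type (fun (m : ∀ k, Fin (M k)) (l : ∀ k, Fin (L k)) =>
        ∑ y, (∏ j, Wy (X (m, l) j) (y j)) * (if dec y l = m then (0 : ℝ) else 1))]
      unfold Pe
      rw [av_code2]
      rfl
    have h1 : ∑ p, P p * Real.log (G p) = av (fun a : A => ∑ y : Fin n → Y, (∏ j, Wy (X a j) (y j)) *
        Real.log (G (a, y))) := by
      rw [← hcav]
      refine Finset.sum_congr rfl fun p _ => ?_
      simp only [P]; ring
    rw [h1, hPe]
    have h2 : ∀ a : A, ∑ y, (∏ j, Wy (X a j) (y j)) * Real.log (G (a, y))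
        = (Real.log (θ * M k) - Real.log (1 + θ)) - Real.log (θ * M k) *
          ∑ y, (∏ j, Wy (X a j) (y j)) * (if dec y a.2 = a.1 then (0 : ℝ) else 1) := by
      intro a
      have h3 : (Real.log (θ * M k) - Real.log (1 + θ)) = ∑ y : Fin n → Y, (∏ j, Wy (X a j) (y j)) *
          (Real.log (θ * M k) - Real.log (1 + θ)) := by
        rw [← Finset.sum_mul, (prod_isDist (fun j => Wy (X a j)) (fun j => hWy _)).2, one_mul]
      rw [h3, Finset.mul_sum, ← Finset.sum_sub_distrib]
      refine Finset.sum_congr rfl fun y _ => ?_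
      simp only [G]
      split_ifs
      · rw [Real.log_div (by positivity) (by positivity)]; ring
      · rw [Real.log_div (by positivity) (by positivity), Real.log_one]; ring
    simp_rw [h2]
    rw [av_sub, av_const, av_mul_left]
    ring
  have hright : klDiv P R = av (fun a : A => ∑ j, klDiv (Wy (X a j)) (T (X a j))) := by
    have h1 : klDiv P R = av (fun a : A => klDiv (fun y : Fin n → Y => ∏ j, Wy (X a j) (y j))
        (fun y => ∏ j, T (X a j) (y j))) := by
      unfold klDiv
      rw [← hcav]
      refine Finset.sum_congr rfl fun p _ => ?_
      simp only [P, R]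
      rw [mul_div_mul_left _ _ hc.ne', mul_assoc]
    rw [h1]
    congr 1
    funext a
    exact klDiv_prod (fun j => Wy (X a j)) (fun j => T (X a j)) (fun j => hWy _)
      (fun j => (hTb _).1)
  rw [hleft, hright] at hDV
  refine hDV.trans ?_
  refine (av_mono fun a => Finset.sum_le_sum fun j _ => (hTb (X a j)).2).trans ?_
  -- pass to averages over pairs
  have hpass : ∀ F : (∀ k, Fin (M k) × Fin (L k)) → ℝ,
      av (fun a : A => F (fun k => (a.1 k, a.2 k))) = av F := by
    intro F
    rw [av_prod_type (fun (m : ∀ k, Fin (M k)) (l : ∀ k, Fin (L k)) => F (fun k => (m k, l k))),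
      ← av_code2, av_code]
  refine le_of_eq ?_
  refine (hpass (fun ω => ∑ j, (ind (enc k (ω k) j) * klDiv (Wy (xU {k})) (Wy (xU ∅))
      + (-Real.log (1 - ε)) * ∑ i ∈ Finset.univ.erase k, ind (enc i (ω i) j)
      + (-Real.log ε) * ∑ i ∈ Finset.univ.erase k,
        ind (enc i (ω i) j) * ind (enc k (ω k) j)))).trans ?_
  rw [av_sum]
  refine Finset.sum_congr rfl fun j _ => ?_
  rw [av_add, av_add, av_mul_right, av_mul_left, av_mul_left, av_sum, av_sum]
  have hco : ∀ i, av (fun ω : ∀ k, Fin (M k) × Fin (L k) => ind (enc i (ω i) j))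
      = muj M L enc i j := fun i =>
    av_coord (Ω := fun k => Fin (M k) × Fin (L k)) i (fun a => ind (enc i a j))
  have hpr : ∀ i ∈ Finset.univ.erase k, av (fun ω : ∀ k, Fin (M k) × Fin (L k) =>
      ind (enc i (ω i) j) * ind (enc k (ω k) j)) = muj M L enc i j * muj M L enc k j :=
    fun i hi => av_pair (Ω := fun k => Fin (M k) × Fin (L k)) (Finset.ne_of_mem_erase hi)
      (fun a => ind (enc i a j)) (fun a => ind (enc k a j))
  rw [Finset.sum_congr rfl hpr, hco k, Finset.sum_congr rfl fun i _ => hco i]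

/-! ### The function `χ` -/

lemma chi_continuous {K : ℕ} {Z : Type*} [Fintype Z] (Wz : (Fin K → Bool) → Z → ℝ) :
    Continuous (chiRho Wz) := by
  unfold chiRho
  fun_prop

lemma chi_pos {K : ℕ} {Z : Type*} [Fintype Z] (Wz : (Fin K → Bool) → Z → ℝ)
    (hWz : ∀ x, IsDist (Wz x)) (hAC : ∀ x, AbsCont (Wz x) (Wz (xU ∅)))
    (hNC : ¬ ∃ lam : Finset (Fin K) → ℝ, (∀ T, 0 ≤ lam T) ∧ lam ∅ = 0 ∧
      (∑ T : Finset (Fin K), lam T) = 1 ∧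
      ∀ z, Wz (xU (∅ : Finset (Fin K))) z = ∑ T : Finset (Fin K), lam T * Wz (xU T) z)
    (ρ : Fin K → ℝ) (h0 : ∀ k, 0 ≤ ρ k) (h1 : ∑ k, ρ k = 1) : 0 < chiRho Wz ρ := by
  have hnn : ∀ z ∈ Finset.univ,
      0 ≤ (∑ k, ρ k * (Wz (xU {k}) z - Wz (xU ∅) z)) ^ 2 / Wz (xU ∅) z := fun z _ =>
    div_nonneg (sq_nonneg _) ((hWz _).1 z)
  rcases (Finset.sum_nonneg hnn).lt_or_eq with h | h
  · exact h
  · exfalso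
    have hz := (Finset.sum_eq_zero_iff_of_nonneg hnn).mp h.symm
    apply hNC
    have hsum : ∀ g : Finset (Fin K) → ℝ,
        ∑ T : Finset (Fin K), (∑ k, if T = {k} then ρ k else 0) * g T = ∑ k, ρ k * g {k} := by
      intro g
      simp_rw [Finset.sum_mul]
      rw [Finset.sum_comm]
      refine Finset.sum_congr rfl fun k _ => ?_
      simp
    refine ⟨fun T => ∑ k, if T = {k} then ρ k else 0, ?_, ?_, ?_, ?_⟩
    · intro T
      refine Finset.sum_nonneg fun k _ => ?_
      split_ifs
      · exact h0 k
      · exact le_rfl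
    · refine Finset.sum_eq_zero fun k _ => ?_
      rw [if_neg]
      exact (Finset.singleton_ne_empty k).symm
    · have := hsum (fun _ => 1)
      simpa [h1] using this
    · intro z
      rw [hsum (fun T => Wz (xU T) z)]
      by_cases hq : Wz (xU ∅) z = 0
      · simp [hq, fun x => hAC x z hq]
      · have h2 := hz z (Finset.mem_univ z)
        rw [div_eq_zero_iff] at h2
        have h3 := pow_eq_zero_iff (two_ne_zero) |>.mp (h2.resolve_right hq)
        simp_rw [mul_sub] at h3
        rw [Finset.sum_sub_distrib, ← Finset.sum_mul, h1] at h3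
        linarith

/-- The claimed region. -/
def region {K : ℕ} {Y Z : Type*} [Fintype Y] [Fintype Z]
    (Wy : (Fin K → Bool) → Y → ℝ) (Wz : (Fin K → Bool) → Z → ℝ) : Set (Fin K → ℝ) :=
  {r : Fin K → ℝ | ∃ ρ : Fin K → ℝ, (∀ k, ρ k ∈ Set.Icc (0 : ℝ) 1) ∧ (∑ k, ρ k) = 1 ∧
      ∀ k, 0 ≤ r k ∧ r k ≤ Real.sqrt (2 / chiRho Wz ρ) *
        (ρ k * klDiv (Wy (xU {k})) (Wy (xU ∅)))}

lemma simplex_le_one {K : ℕ} (ρ : Fin K → ℝ) (h0 : ∀ k, 0 ≤ ρ k) (h1 : ∑ k, ρ k = 1) (k : Fin K) :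
    ρ k ≤ 1 := by
  rw [← h1]
  exact Finset.single_le_sum (fun i _ => h0 i) (Finset.mem_univ k)

lemma region_closed {K : ℕ} {Y Z : Type*} [Fintype Y] [Fintype Z]
    (Wy : (Fin K → Bool) → Y → ℝ) (Wz : (Fin K → Bool) → Z → ℝ)
    (hchi : ∀ ρ : Fin K → ℝ, (∀ k, 0 ≤ ρ k) → ∑ k, ρ k = 1 → 0 < chiRho Wz ρ) :
    IsClosed (region Wy Wz) := by
  rw [← isSeqClosed_iff_isClosed]
  intro r r0 hr hlim
  choose ρ hρ hρ1 hb using hr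
  have hmem : ∀ n, ρ n ∈ stdSimplex ℝ (Fin K) := fun n => ⟨fun k => (hρ n k).1, hρ1 n⟩
  obtain ⟨ρ0, hρ0, φ, hφ, hφlim⟩ := (isCompact_stdSimplex ℝ (Fin K)).tendsto_subseq hmem
  refine ⟨ρ0, fun k => ⟨hρ0.1 k, simplex_le_one _ hρ0.1 hρ0.2 k⟩, hρ0.2, fun k => ?_⟩
  have hrk : Tendsto (fun n => r n k) atTop (𝓝 (r0 k)) := (tendsto_pi_nhds.mp hlim) k
  have hrk' : Tendsto (fun n => r (φ n) k) atTop (𝓝 (r0 k)) := hrk.comp hφ.tendsto_atTop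
  refine ⟨ge_of_tendsto' hrk fun n => (hb n k).1, ?_⟩
  have hρk : Tendsto (fun n => ρ (φ n) k) atTop (𝓝 (ρ0 k)) := (tendsto_pi_nhds.mp hφlim) k
  have hc : Tendsto (fun n => chiRho Wz (ρ (φ n))) atTop (𝓝 (chiRho Wz ρ0)) :=
    ((chi_continuous Wz).tendsto ρ0).comp hφlim
  have hR : Tendsto (fun n => Real.sqrt (2 / chiRho Wz (ρ (φ n))) *
        (ρ (φ n) k * klDiv (Wy (xU {k})) (Wy (xU ∅)))) atTop
      (𝓝 (Real.sqrt (2 / chiRho Wz ρ0) * (ρ0 k * klDiv (Wy (xU {k})) (Wy (xU ∅))))) :=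
    ((tendsto_const_nhds.div hc (hchi ρ0 hρ0.1 hρ0.2).ne').sqrt).mul (hρk.mul_const _)
  exact le_of_tendsto_of_tendsto' hrk' hR fun n => (hb (φ n) k).2

/-! ### Converse: asymptotics -/

lemma fano_asymp {K : ℕ} {Y : Type*} [Fintype Y] (Wy : (Fin K → Bool) → Y → ℝ)
    (hWy : ∀ x, IsDist (Wy x)) (k : Fin K)
    (hAC : AbsCont (Wy (xU {k})) (Wy (xU ∅)))
    (M L : ℕ → Fin K → ℕ) (hM : ∀ n k, 0 < M n k) (hL : ∀ n k, 0 < L n k)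
    (enc : ∀ n (k : Fin K), Fin (M n k) × Fin (L n k) → Fin n → Bool)
    (dec : ∀ n, (Fin n → Y) → (∀ k, Fin (L n k)) → ∀ k, Fin (M n k))
    (hPe : Tendsto (fun n => Pe Wy (M n) (L n) (enc n) (dec n)) atTop (𝓝 0))
    (hsmall : ∀ η > 0, ∀ᶠ n in atTop, ∀ j, ∑ k, muj (M n) (L n) (enc n) k j ≤ η)
    (ε : ℝ) (hε : 0 < ε) :
    ∀ᶠ n in atTop, (1 - ε) * Real.log (M n k) ≤
      (∑ j, muj (M n) (L n) (enc n) k j) * klDiv (Wy (xU {k})) (Wy (xU ∅))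
        + ε * ∑ i, ∑ j, muj (M n) (L n) (enc n) i j := by
  have hD : 0 ≤ klDiv (Wy (xU {k})) (Wy (xU ∅)) := klDiv_nonneg' _ _ (hWy _) (hWy _) hAC
  have hlog2 : 0 < Real.log 2 := Real.log_pos (by norm_num)
  set ε0 : ℝ := 1 - Real.exp (-(ε / 2)) with hε0
  have hε0pos : 0 < ε0 := by
    have : Real.exp (-(ε / 2)) < 1 := Real.exp_lt_one_iff.mpr (by linarith)
    rw [hε0]; linarith
  have hε0lt : ε0 < 1 := by
    have := Real.exp_pos (-(ε / 2))
    rw [hε0]; linarith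
  have hla : -Real.log (1 - ε0) = ε / 2 := by
    rw [hε0]; simp
  set b : ℝ := -Real.log ε0 with hb
  have hb0 : 0 ≤ b := by
    have := Real.log_nonpos hε0pos.le hε0lt.le
    rw [hb]; linarith
  set η : ℝ := ε / 2 / (b + 1) with hη
  have hηpos : 0 < η := by positivity
  have hbη : b * η ≤ ε / 2 := by
    rw [hη, mul_div_assoc', div_le_iff₀ (by positivity)]
    nlinarith
  set θ : ℝ := 3 / (ε * Real.log 2) with hθ
  have hθpos : 0 < θ := by positivity
  have hPe1 : ∀ᶠ n in atTop, Pe Wy (M n) (L n) (enc n) (dec n) ≤ ε / 3 :=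
    hPe.eventually_le_const (by positivity)
  have hPe2 : ∀ᶠ n in atTop, Pe Wy (M n) (L n) (enc n) (dec n) * Real.log θ ≤ ε / 3 * Real.log 2 := by
    have h := hPe.mul_const (Real.log θ)
    rw [zero_mul] at h
    exact h.eventually_le_const (by positivity)
  filter_upwards [hPe1, hPe2, hsmall η hηpos] with n h1 h2 h3
  have hmu : ∀ i j, 0 ≤ muj (M n) (L n) (enc n) i j := fun i j => muj_nonneg _ _ _ _ _
  have hrhs : ∑ j, (muj (M n) (L n) (enc n) k j * klDiv (Wy (xU {k})) (Wy (xU ∅))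
        + (-Real.log (1 - ε0)) * ∑ i ∈ Finset.univ.erase k, muj (M n) (L n) (enc n) i j
        + (-Real.log ε0) * ∑ i ∈ Finset.univ.erase k,
          muj (M n) (L n) (enc n) i j * muj (M n) (L n) (enc n) k j)
      ≤ (∑ j, muj (M n) (L n) (enc n) k j) * klDiv (Wy (xU {k})) (Wy (xU ∅))
        + ε * ∑ i, ∑ j, muj (M n) (L n) (enc n) i j := by
    rw [Finset.sum_comm (f := fun i j => muj (M n) (L n) (enc n) i j), Finset.sum_mul,
      Finset.mul_sum, ← Finset.sum_add_distrib]
    refine Finset.sum_le_sum fun j _ => ?_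
    rw [hla, ← hb, ← Finset.sum_mul]
    have h4 : ∑ i ∈ Finset.univ.erase k, muj (M n) (L n) (enc n) i j
        ≤ ∑ i, muj (M n) (L n) (enc n) i j :=
      Finset.sum_le_sum_of_subset_of_nonneg (Finset.erase_subset _ _) fun i _ _ => hmu i j
    have h5 : 0 ≤ ∑ i ∈ Finset.univ.erase k, muj (M n) (L n) (enc n) i j :=
      Finset.sum_nonneg fun i _ => hmu i j
    have h6 : muj (M n) (L n) (enc n) k j ≤ η :=
      (Finset.single_le_sum (f := fun i => muj (M n) (L n) (enc n) i j)
        (fun i _ => hmu i j) (Finset.mem_univ k)).trans (h3 j)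
    set S := ∑ i ∈ Finset.univ.erase k, muj (M n) (L n) (enc n) i j
    set S' := ∑ i, muj (M n) (L n) (enc n) i j
    have h7 : b * (S * muj (M n) (L n) (enc n) k j) ≤ ε / 2 * S := by
      calc b * (S * muj (M n) (L n) (enc n) k j) ≤ b * (S * η) :=
            mul_le_mul_of_nonneg_left (mul_le_mul_of_nonneg_left h6 h5) hb0
        _ = (b * η) * S := by ring
        _ ≤ ε / 2 * S := mul_le_mul_of_nonneg_right hbη h5
    nlinarith
  have hrn : 0 ≤ (∑ j, muj (M n) (L n) (enc n) k j) * klDiv (Wy (xU {k})) (Wy (xU ∅))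
        + ε * ∑ i, ∑ j, muj (M n) (L n) (enc n) i j :=
    add_nonneg (mul_nonneg (Finset.sum_nonneg fun j _ => hmu k j) hD)
      (mul_nonneg hε.le (Finset.sum_nonneg fun i _ => Finset.sum_nonneg fun j _ => hmu i j))
  rcases Nat.lt_or_ge (M n k) 2 with hM1 | hM2
  · have : M n k = 1 := by have := hM n k; omega
    rw [this]; simpa using hrn
  · have hf := (fano Wy hWy k hAC ε0 hε0pos hε0lt θ hθpos (M n) (L n) (hM n) (hL n)
      (enc n) (dec n)).trans hrhs
    refine le_trans ?_ hf
    have hMr : (2 : ℝ) ≤ M n k := by exact_mod_cast hM2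
    have hlm : Real.log 2 ≤ Real.log (M n k) := Real.log_le_log (by norm_num) hMr
    rw [Real.log_mul hθpos.ne' (by linarith)]
    have h8 : Real.log (1 + θ) ≤ Real.log θ + ε / 3 * Real.log 2 := by
      have h9 : 1 + θ = θ * (1 + 1 / θ) := by field_simp; ring
      rw [h9, Real.log_mul hθpos.ne' (by positivity)]
      have h10 := Real.log_le_sub_one_of_pos (show 0 < 1 + 1 / θ by positivity)
      have h11 : 1 / θ = ε / 3 * Real.log 2 := by rw [hθ]; field_simp
      linarith
    have h12 : Pe Wy (M n) (L n) (enc n) (dec n) * Real.log (M n k) ≤ ε / 3 * Real.log (M n k) :=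
      mul_le_mul_of_nonneg_right h1 (by linarith)
    have h13 : ε / 3 * Real.log 2 ≤ ε / 3 * Real.log (M n k) :=
      mul_le_mul_of_nonneg_left hlm (by positivity)
    nlinarith

lemma converse_main {K : ℕ} (hK : 2 ≤ K) {Y Z : Type*} [Fintype Y] [Fintype Z]
    (Wy : (Fin K → Bool) → Y → ℝ) (Wz : (Fin K → Bool) → Z → ℝ)
    (hWy : ∀ x, IsDist (Wy x)) (hWz : ∀ x, IsDist (Wz x))
    (hACz : ∀ x, AbsCont (Wz x) (Wz (xU ∅)))
    (hNC : ¬ ∃ lam : Finset (Fin K) → ℝ, (∀ T, 0 ≤ lam T) ∧ lam ∅ = 0 ∧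
      (∑ T : Finset (Fin K), lam T) = 1 ∧
      ∀ z, Wz (xU (∅ : Finset (Fin K))) z = ∑ T : Finset (Fin K), lam T * Wz (xU T) z)
    (hACy : ∀ k, AbsCont (Wy (xU {k})) (Wy (xU ∅)))
    (r : Fin K → ℝ)
    (M L : ℕ → Fin K → ℕ) (hM : ∀ n k, 0 < M n k) (hL : ∀ n k, 0 < L n k)
    (enc : ∀ n (k : Fin K), Fin (M n k) × Fin (L n k) → Fin n → Bool)
    (dec : ∀ n, (Fin n → Y) → (∀ k, Fin (L n k)) → ∀ k, Fin (M n k))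
    (hPe : Tendsto (fun n => Pe Wy (M n) (L n) (enc n) (dec n)) atTop (𝓝 0))
    (hδ : Tendsto (fun n => deltaN Wz (M n) (L n) (enc n)) atTop (𝓝 0))
    (hr : ∀ k, Tendsto (fun n => Real.log (M n k : ℝ) /
            Real.sqrt ((n : ℝ) * deltaN Wz (M n) (L n) (enc n))) atTop (𝓝 (r k))) :
    r ∈ region Wy Wz := by
  have hD : ∀ k, 0 ≤ klDiv (Wy (xU {k})) (Wy (xU ∅)) := fun k =>
    klDiv_nonneg' _ _ (hWy _) (hWy _) (hACy k)
  have hKpos : (0 : ℝ) < K := by exact_mod_cast (by omega : 0 < K)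
  have hlogM : ∀ n k, 0 ≤ Real.log (M n k) := fun n k =>
    Real.log_nonneg (by exact_mod_cast hM n k)
  have hr0 : ∀ k, 0 ≤ r k := fun k => ge_of_tendsto' (hr k) fun n =>
    div_nonneg (hlogM n k) (Real.sqrt_nonneg _)
  have hmu : ∀ n i j, 0 ≤ muj (M n) (L n) (enc n) i j := fun n i j => muj_nonneg _ _ _ _ _
  have hsmall : ∀ η > 0, ∀ᶠ n in atTop, ∀ j, ∑ k, muj (M n) (L n) (enc n) k j ≤ η := by
    intro η hη
    obtain ⟨γ, hγ, hc⟩ := klDiv_compact (fun T : Finset (Fin K) => Wz (xU T)) (fun T => hWz _) ∅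
      (fun T => hACz _) hNC (η / K) (by positivity)
    filter_upwards [hδ.eventually_le_const hγ] with n hn j
    have h := mu_le_of_klDiv Wz (M n) (L n) (hM n) (hL n) (enc n) (η / K) γ hc j
      ((delta_ge_single Wz hWz hACz (M n) (L n) (hM n) (hL n) (enc n) j).trans hn)
    rwa [mul_div_cancel₀ _ hKpos.ne'] at h
  set S : ℕ → Fin K → ℝ := fun n k => ∑ j, muj (M n) (L n) (enc n) k j with hS
  set St : ℕ → ℝ := fun n => ∑ k, S n k with hSt
  have hS0 : ∀ n k, 0 ≤ S n k := fun n k => Finset.sum_nonneg fun j _ => hmu n k j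
  have hSSt : ∀ n k, S n k ≤ St n := fun n k =>
    Finset.single_le_sum (f := fun k => S n k) (fun i _ => hS0 n i) (Finset.mem_univ k)
  have hfano : ∀ k, ∀ ε > 0, ∀ᶠ n in atTop, (1 - ε) * Real.log (M n k) ≤
      S n k * klDiv (Wy (xU {k})) (Wy (xU ∅)) + ε * St n := fun k ε hε =>
    fano_asymp Wy hWy k (hACy k) M L hM hL enc dec hPe hsmall ε hε
  by_cases hfreq : ∃ᶠ n in atTop, St n = 0
  · -- the degenerate case: r = 0
    have hrz : ∀ k, r k = 0 := by
      intro k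
      have hfr : ∃ᶠ n in atTop, Real.log (M n k : ℝ) /
            Real.sqrt ((n : ℝ) * deltaN Wz (M n) (L n) (enc n)) ∈ ({0} : Set ℝ) := by
        refine (hfreq.and_eventually (hfano k (1 / 2) (by norm_num))).mono ?_
        rintro n ⟨h1, h2⟩
        have h3 : S n k = 0 := le_antisymm (h1 ▸ hSSt n k) (hS0 n k)
        rw [h1, h3] at h2
        have h4 : Real.log (M n k) = 0 := by linarith [hlogM n k]
        simp [h4]
      exact isClosed_singleton.mem_of_frequently_of_tendsto hfr (hr k)
    refine ⟨Pi.single ⟨0, by omega⟩ 1, fun k => ?_, by simp, fun k => ?_⟩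
    · by_cases hk : k = ⟨0, by omega⟩
      · subst hk; simp
      · simp [Pi.single_eq_of_ne hk]
    · rw [hrz k]
      refine ⟨le_rfl, mul_nonneg (Real.sqrt_nonneg _) (mul_nonneg ?_ (hD k))⟩
      by_cases hk : k = ⟨0, by omega⟩
      · subst hk; simp
      · simp [Pi.single_eq_of_ne hk]
  · rw [Filter.not_frequently] at hfreq
    have hStpos : ∀ᶠ n in atTop, 0 < St n := by
      filter_upwards [hfreq] with n hn
      exact lt_of_le_of_ne (Finset.sum_nonneg fun k _ => hS0 n k) (Ne.symm hn)
    have hmem : ∀ᶠ n in atTop, (fun k => S n k / St n) ∈ stdSimplex ℝ (Fin K) := by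
      filter_upwards [hStpos] with n hn
      refine ⟨fun k => div_nonneg (hS0 n k) hn.le, ?_⟩
      rw [← Finset.sum_div, div_self hn.ne']
    obtain ⟨ρ, hρ, φ, hφ, hφlim⟩ :=
      (isCompact_stdSimplex ℝ (Fin K)).tendsto_subseq' hmem.frequently
    have hφt : Tendsto φ atTop atTop := hφ.tendsto_atTop
    have hρk : ∀ k, Tendsto (fun n => S (φ n) k / St (φ n)) atTop (𝓝 (ρ k)) := fun k =>
      (tendsto_pi_nhds.mp hφlim) k
    have hchi : 0 < chiRho Wz ρ := chi_pos Wz hWz hACz hNC ρ hρ.1 hρ.2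
    -- the average output distribution
    set Rb : ℕ → Z → ℝ := fun n z => (∑ j, qh Wz (M n) (L n) (enc n) j z) / n with hRb
    set s : ℕ → ℝ := fun n => St n / n with hs
    have hspos : ∀ᶠ n in atTop, 0 < s n := by
      filter_upwards [hStpos, eventually_gt_atTop 0] with n h1 h2
      have : (0 : ℝ) < n := by exact_mod_cast h2
      exact div_pos h1 this
    have hStle : ∀ n η, (∀ j, ∑ k, muj (M n) (L n) (enc n) k j ≤ η) → St n ≤ n * η := by
      intro n η h
      simp only [hSt, hS]
      rw [Finset.sum_comm]
      refine (Finset.sum_le_sum fun j _ => h j).trans ?_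
      simp
    have hs0 : Tendsto s atTop (𝓝 0) := by
      rw [Metric.tendsto_nhds]
      intro ε hε
      filter_upwards [hsmall (ε / 2) (by positivity), hspos, eventually_gt_atTop 0] with n h1 h2 h3
      have hn : (0 : ℝ) < n := by exact_mod_cast h3
      rw [Real.dist_eq, sub_zero, abs_of_pos h2]
      have := hStle n _ h1
      simp only [hs]
      rw [div_lt_iff₀ hn]
      nlinarith
    -- first-order expansion
    have hfirst : ∀ n z η, 0 ≤ η → (∀ j, ∑ k, muj (M n) (L n) (enc n) k j ≤ η) →
        |(∑ j, qh Wz (M n) (L n) (enc n) j z) - n * Wz (xU ∅) z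
          - ∑ k, S n k * (Wz (xU {k}) z - Wz (xU ∅) z)| ≤ (2 + 2 * K) * (η * St n) := by
      intro n z η hη h
      have hne : ∀ k, Nonempty (Fin (M n k) × Fin (L n k)) := fun k =>
        pair_nonempty (hM n k) (hL n k)
      have hB : ∀ x, |Wz x z| ≤ 1 := by
        intro x
        rw [abs_of_nonneg ((hWz x).1 z), ← (hWz x).2]
        exact Finset.single_le_sum (fun i _ => (hWz x).1 i) (Finset.mem_univ z)
      have heq : (∑ j, qh Wz (M n) (L n) (enc n) j z) - n * Wz (xU ∅) z
          - ∑ k, S n k * (Wz (xU {k}) z - Wz (xU ∅) z)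
          = ∑ j, (qh Wz (M n) (L n) (enc n) j z - Wz (xU ∅) z
            - ∑ k, muj (M n) (L n) (enc n) k j * (Wz (xU {k}) z - Wz (xU ∅) z)) := by
        rw [Finset.sum_sub_distrib, Finset.sum_sub_distrib]
        congr 1
        · simp
        · rw [Finset.sum_comm]
          simp only [hS, Finset.sum_mul]
      rw [heq]
      refine (Finset.abs_sum_le_sum_abs _ _).trans ?_
      have hStc : St n = ∑ j, ∑ k, muj (M n) (L n) (enc n) k j := by
        simp only [hSt, hS]; rw [Finset.sum_comm]
      rw [hStc, Finset.mul_sum, Finset.mul_sum]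
      refine Finset.sum_le_sum fun j _ => ?_
      have h1 := first_order (Ω := fun k => Fin (M n k) × Fin (L n k))
        (fun k a => enc n k a j) (fun x => Wz x z) 1 hB
      have h2 : ∑ k, muj (M n) (L n) (enc n) k j ≤ η := h j
      have h3 : 0 ≤ ∑ k, muj (M n) (L n) (enc n) k j := Finset.sum_nonneg fun k _ => hmu n k j
      refine h1.trans ?_
      change (2 * 1 + 2 * 1 * (K : ℝ)) * (∑ k, muj (M n) (L n) (enc n) k j) ^ 2 ≤ _
      rw [mul_one, sq]
      exact mul_le_mul_of_nonneg_left (mul_le_mul_of_nonneg_right h2 h3) (by positivity)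
    have herr : ∀ z, Tendsto (fun n => (Rb n z - Wz (xU ∅) z) / s n
        - ∑ k, S n k / St n * (Wz (xU {k}) z - Wz (xU ∅) z)) atTop (𝓝 0) := by
      intro z
      rw [Metric.tendsto_nhds]
      intro ε hε
      set η : ℝ := ε / 2 / (2 + 2 * K) with hη
      have hηpos : 0 < η := by positivity
      filter_upwards [hsmall η hηpos, hStpos, eventually_gt_atTop 0] with n h1 h2 h3
      have hn : (0 : ℝ) < n := by exact_mod_cast h3
      have h4 := hfirst n z η hηpos.le h1
      have h5 : (Rb n z - Wz (xU ∅) z) / s n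
        - ∑ k, S n k / St n * (Wz (xU {k}) z - Wz (xU ∅) z)
        = ((∑ j, qh Wz (M n) (L n) (enc n) j z) - n * Wz (xU ∅) z
          - ∑ k, S n k * (Wz (xU {k}) z - Wz (xU ∅) z)) / St n := by
        rw [sub_div _ (∑ k, S n k * (Wz (xU {k}) z - Wz (xU ∅) z)), Finset.sum_div]
        congr 1
        · simp only [hRb, hs]; field_simp
        · refine Finset.sum_congr rfl fun k _ => ?_
          ring
      rw [Real.dist_eq, sub_zero, h5, abs_div, abs_of_pos h2, div_lt_iff₀ h2]
      refine lt_of_le_of_lt h4 ?_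
      have h6 : (2 + 2 * (K : ℝ)) * (η * St n) = ε / 2 * St n := by rw [hη]; field_simp
      rw [h6]
      nlinarith
    have hv : ∀ z, Tendsto (fun n => (Rb (φ n) z - Wz (xU ∅) z) / s (φ n)) atTop
        (𝓝 (∑ k, ρ k * (Wz (xU {k}) z - Wz (xU ∅) z))) := by
      intro z
      have h1 := (herr z).comp hφt
      have h2 : Tendsto (fun n => ∑ k, S (φ n) k / St (φ n) * (Wz (xU {k}) z - Wz (xU ∅) z)) atTop
          (𝓝 (∑ k, ρ k * (Wz (xU {k}) z - Wz (xU ∅) z))) :=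
        tendsto_finsetSum _ fun k _ => (hρk k).mul_const _
      have h3 := h1.add h2
      simpa using h3
    have hdist : ∀ᶠ n in atTop, IsDist (Rb n) ∧
        n * klDiv (Rb n) (Wz (xU ∅)) ≤ deltaN Wz (M n) (L n) (enc n) := by
      filter_upwards [eventually_gt_atTop 0] with n hn
      exact delta_ge_avg Wz hWz hACz (M n) (L n) (hM n) (hL n) (enc n) hn
    have hRbAC : ∀ n, AbsCont (Rb n) (Wz (xU ∅)) := by
      intro n z hz
      simp only [hRb]
      rw [Finset.sum_eq_zero, zero_div]
      intro j _
      exact qh_absCont Wz hACz (M n) (L n) (enc n) j z hz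
    have hκ : Tendsto (fun n => klDiv (Rb (φ n)) (Wz (xU ∅)) / s (φ n) ^ 2) atTop
        (𝓝 (chiRho Wz ρ / 2)) :=
      klDiv_asymp (Wz (xU ∅)) _ (hWz _) (fun n => Rb (φ n))
        (hφt.eventually (hdist.mono fun n h => h.1)) (Eventually.of_forall fun n => hRbAC (φ n))
        (fun n => s (φ n)) (hφt.eventually hspos) (hs0.comp hφt) hv
    refine ⟨ρ, fun k => ⟨hρ.1 k, simplex_le_one _ hρ.1 hρ.2 k⟩, hρ.2, fun k => ⟨hr0 k, ?_⟩⟩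
    have hkey : ∀ ε > 0, ε < 1 → (1 - ε) * (r k * Real.sqrt (chiRho Wz ρ / 2)) ≤
        ρ k * klDiv (Wy (xU {k})) (Wy (xU ∅)) + ε := by
      intro ε hε hε1
      have hl : Tendsto (fun n => (1 - ε) * (Real.log (M (φ n) k : ℝ) /
          Real.sqrt (((φ n : ℕ) : ℝ) * deltaN Wz (M (φ n)) (L (φ n)) (enc (φ n))) *
          Real.sqrt (klDiv (Rb (φ n)) (Wz (xU ∅)) / s (φ n) ^ 2))) atTop
          (𝓝 ((1 - ε) * (r k * Real.sqrt (chiRho Wz ρ / 2)))) :=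
        (((hr k).comp hφt).mul hκ.sqrt).const_mul _
      have hrr : Tendsto (fun n => S (φ n) k / St (φ n) * klDiv (Wy (xU {k})) (Wy (xU ∅)) + ε) atTop
          (𝓝 (ρ k * klDiv (Wy (xU {k})) (Wy (xU ∅)) + ε)) :=
        ((hρk k).mul_const _).add_const _
      refine le_of_tendsto_of_tendsto hl hrr ?_
      filter_upwards [hφt.eventually (hfano k ε hε), hφt.eventually hStpos,
        hφt.eventually hspos, hφt.eventually hdist, hφt.eventually (eventually_gt_atTop 0),
        hκ.eventually_const_lt (show 0 < chiRho Wz ρ / 2 by positivity)] with n h1 h2 h3 h4 h5 h6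
      generalize hN : φ n = N at *
      have hn : (0 : ℝ) < N := by exact_mod_cast h5
      set κ := klDiv (Rb N) (Wz (xU ∅)) / s N ^ 2 with hκd
      have hkl : klDiv (Rb N) (Wz (xU ∅)) = κ * s N ^ 2 := by rw [hκd]; field_simp
      have hsn : s N = St N / N := rfl
      have h7 : St N * Real.sqrt κ ≤ Real.sqrt (N * deltaN Wz (M N) (L N) (enc N)) := by
        refine Real.le_sqrt_of_sq_le ?_
        rw [mul_pow, Real.sq_sqrt h6.le]
        have h8 := mul_le_mul_of_nonneg_left h4.2 hn.le
        refine le_trans (le_of_eq ?_) h8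
        rw [hkl, hsn]; field_simp
      have h9 : 0 < St N * Real.sqrt κ := mul_pos h2 (Real.sqrt_pos.mpr h6)
      set q := Real.sqrt (N * deltaN Wz (M N) (L N) (enc N)) with hq
      have hq0 : 0 < q := lt_of_lt_of_le h9 h7
      have h10 : Real.log (M N k) / q * Real.sqrt κ ≤ Real.log (M N k) / St N := by
        rw [div_mul_eq_mul_div, div_le_div_iff₀ hq0 h2]
        have := mul_le_mul_of_nonneg_left h7 (hlogM N k)
        linarith
      have h11 : (1 - ε) * (Real.log (M N k) / St N) ≤
          S N k / St N * klDiv (Wy (xU {k})) (Wy (xU ∅)) + ε := by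
        rw [mul_div_assoc', div_le_iff₀ h2]
        refine h1.trans (le_of_eq ?_)
        field_simp
      exact (mul_le_mul_of_nonneg_left h10 (by linarith)).trans h11
    have hlim : r k * Real.sqrt (chiRho Wz ρ / 2) ≤ ρ k * klDiv (Wy (xU {k})) (Wy (xU ∅)) := by
      have ha : Tendsto (fun ε : ℝ => (1 - ε) * (r k * Real.sqrt (chiRho Wz ρ / 2))) (𝓝[>] 0)
          (𝓝 ((1 - 0) * (r k * Real.sqrt (chiRho Wz ρ / 2)))) :=
        tendsto_nhdsWithin_of_tendsto_nhds (Continuous.tendsto (by fun_prop) 0)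
      have hb : Tendsto (fun ε : ℝ => ρ k * klDiv (Wy (xU {k})) (Wy (xU ∅)) + ε) (𝓝[>] 0)
          (𝓝 (ρ k * klDiv (Wy (xU {k})) (Wy (xU ∅)) + 0)) :=
        tendsto_nhdsWithin_of_tendsto_nhds (Continuous.tendsto (by fun_prop) 0)
      have := le_of_tendsto_of_tendsto ha hb (by
        filter_upwards [Ioo_mem_nhdsGT (show (0 : ℝ) < 1 by norm_num)] with ε hε
        exact hkey ε hε.1 hε.2)
      simpa using this
    have hsq : Real.sqrt (2 / chiRho Wz ρ) * Real.sqrt (chiRho Wz ρ / 2) = 1 := by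
      rw [← Real.sqrt_mul (by positivity)]
      have : 2 / chiRho Wz ρ * (chiRho Wz ρ / 2) = 1 := by field_simp
      rw [this, Real.sqrt_one]
    calc r k = Real.sqrt (2 / chiRho Wz ρ) * (r k * Real.sqrt (chiRho Wz ρ / 2)) := by
          rw [mul_left_comm, hsq, mul_one]
      _ ≤ _ := mul_le_mul_of_nonneg_left hlim (Real.sqrt_nonneg _)

/-! ### Achievability: the random code stored in the keys -/

/-- Key size: the key indexes all codebooks. -/
def Lr (n b M : ℕ) : ℕ := Fintype.card (Fin n → Fin M → Fin b)

/-- A key is a codebook. -/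
def ev (n b M : ℕ) : Fin (Lr n b M) ≃ (Fin n → Fin M → Fin b) := (Fintype.equivFin _).symm

/-- The encoder reads the codebook. -/
def encR {K : ℕ} (n b : ℕ) (a M : Fin K → ℕ) (k : Fin K)
    (p : Fin (M k) × Fin (Lr n b (M k))) (j : Fin n) : Bool :=
  decide ((ev n b (M k) p.2 j p.1 : ℕ) < a k)

/-- Input letter determined by one column of the codebooks and the messages. -/
def xin {K b : ℕ} (a M : Fin K → ℕ) (m : ∀ k, Fin (M k)) (c : ∀ k, Fin (M k) → Fin b) :
    Fin K → Bool := fun k => decide ((c k (m k) : ℕ) < a k)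

lemma Lr_pos (n b M : ℕ) (hb : 0 < b) : 0 < Lr n b M := by
  have : Nonempty (Fin b) := ⟨⟨0, hb⟩⟩
  exact Fintype.card_pos

lemma av_key {K : ℕ} (n b : ℕ) (M : Fin K → ℕ)
    (f : (Fin n → ∀ k, Fin (M k) → Fin b) → ℝ) :
    av (fun l : ∀ k, Fin (Lr n b (M k)) => f (fun j k => ev n b (M k) (l k) j)) = av f := by
  exact av_equiv ((Equiv.piCongrRight fun k => ev n b (M k)).trans
    (Equiv.piComm (fun (_ : Fin K) (_ : Fin n) => _))) f

lemma av_ind {N b : ℕ} (a : ℕ) (hb : 0 < b) (hab : a ≤ b) (m : Fin N) :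
    av (fun c : Fin N → Fin b => ind (decide ((c m : ℕ) < a))) = (a : ℝ) / b := by
  have : Nonempty (Fin b) := ⟨⟨0, hb⟩⟩
  rw [av_coord (Ω := fun _ : Fin N => Fin b) m (fun e : Fin b => ind (decide ((e : ℕ) < a)))]
  unfold av ind
  have h : ∑ e : Fin b, (if decide ((e : ℕ) < a) = true then (1 : ℝ) else 0) = a := by
    rw [Fin.sum_univ_eq_sum_range (fun i => if decide (i < a) = true then (1 : ℝ) else 0) b]
    simp only [decide_eq_true_eq, Finset.sum_ite, Finset.sum_const_zero, add_zero,
      Finset.sum_const, nsmul_eq_mul, mul_one]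
    congr 1
    have : (Finset.range b).filter (fun x => x < a) = Finset.range a := by
      ext x; simp; omega
    rw [this, Finset.card_range]
  rw [h, Fintype.card_fin]
  field_simp

lemma av_marg {K b : ℕ} (M : Fin K → ℕ) (m m' : ∀ k, Fin (M k)) (G : (Fin K → Fin b) → ℝ) :
    av (fun c : ∀ k, Fin (M k) → Fin b => G (fun k => c k (m k)))
      = av (fun c : ∀ k, Fin (M k) → Fin b => G (fun k => c k (m' k))) := by
  have := av_equiv (Equiv.piCongrRight fun k =>
    (Equiv.arrowCongr (Equiv.swap (m k) (m' k)) (Equiv.refl (Fin b))))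
    (fun c : ∀ k, Fin (M k) → Fin b => G (fun k => c k (m k)))
  rw [← this]
  congr 1
  funext c
  congr 1
  funext k
  simp [Equiv.arrowCongr]

/-- Single-letter output distribution. -/
def Qp {K b : ℕ} {Z : Type*} (Wz : (Fin K → Bool) → Z → ℝ) (a M : Fin K → ℕ)
    (m : ∀ k, Fin (M k)) (z : Z) : ℝ :=
  av (fun c : ∀ k, Fin (M k) → Fin b => Wz (xin a M m c) z)

lemma Qp_indep {K b : ℕ} {Z : Type*} (Wz : (Fin K → Bool) → Z → ℝ) (a M : Fin K → ℕ)
    (m m' : ∀ k, Fin (M k)) (z : Z) : Qp (b := b) Wz a M m z = Qp (b := b) Wz a M m' z :=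
  av_marg M m m' (fun ω => Wz (fun k => decide ((ω k : ℕ) < a k)) z)

lemma Qhat_encR {K n b : ℕ} {Z : Type*} [Fintype Z] (Wz : (Fin K → Bool) → Z → ℝ)
    (a M : Fin K → ℕ) (m : ∀ k, Fin (M k)) (z : Fin n → Z) :
    Qhat Wz M (fun k => Lr n b (M k)) (encR n b a M) z = ∏ j, Qp (b := b) Wz a M m (z j) := by
  unfold Qhat prodChannel
  rw [av_code2 M (fun k => Lr n b (M k))
    (fun m l => ∏ j, Wz (fun k => encR n b a M k (m k, l k) j) (z j))]
  have hne : Nonempty (∀ k, Fin (M k)) := ⟨m⟩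
  have h : ∀ m' : ∀ k, Fin (M k), av (fun l : ∀ k, Fin (Lr n b (M k)) =>
      ∏ j, Wz (fun k => encR n b a M k (m' k, l k) j) (z j))
      = ∏ j, Qp (b := b) Wz a M m (z j) := by
    intro m'
    have h1 := av_key n b M (fun c => ∏ j, Wz (xin a M m' (c j)) (z j))
    refine Eq.trans ?_ (h1.trans ?_)
    · rfl
    · rw [av_pi_prod (fun j c => Wz (xin a M m' c) (z j))]
      exact Finset.prod_congr rfl fun j _ => Qp_indep Wz a M m' m (z j)
  simp_rw [h]
  exact av_const _

lemma Qp_isDist {K b : ℕ} {Z : Type*} [Fintype Z] (hb : 0 < b) (Wz : (Fin K → Bool) → Z → ℝ)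
    (hWz : ∀ x, IsDist (Wz x)) (a M : Fin K → ℕ)
    (m : ∀ k, Fin (M k)) : IsDist (Qp (b := b) Wz a M m) := by
  have : Nonempty (Fin b) := ⟨⟨0, hb⟩⟩
  refine ⟨fun z => av_nonneg fun c => (hWz _).1 z, ?_⟩
  unfold Qp
  rw [← av_sum]
  simp_rw [(hWz _).2]
  exact av_const _

lemma Qp_absCont {K b : ℕ} {Z : Type*} (Wz : (Fin K → Bool) → Z → ℝ)
    (hAC : ∀ x, AbsCont (Wz x) (Wz (xU ∅))) (a M : Fin K → ℕ)
    (m : ∀ k, Fin (M k)) : AbsCont (Qp (b := b) Wz a M m) (Wz (xU ∅)) := by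
  intro z hz
  unfold Qp
  simp [hAC _ z hz, av]

lemma deltaN_encR {K n b : ℕ} (hb : 0 < b) {Z : Type*} [Fintype Z] (Wz : (Fin K → Bool) → Z → ℝ)
    (hWz : ∀ x, IsDist (Wz x)) (hAC : ∀ x, AbsCont (Wz x) (Wz (xU ∅)))
    (a M : Fin K → ℕ) (m : ∀ k, Fin (M k)) :
    deltaN (n := n) Wz M (fun k => Lr n b (M k)) (encR n b a M)
      = n * klDiv (Qp (b := b) Wz a M m) (Wz (xU ∅)) := by
  unfold deltaN
  have h : Qhat Wz M (fun k => Lr n b (M k)) (encR n b a M)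
      = fun z : Fin n → Z => ∏ j, Qp (b := b) Wz a M m (z j) := by
    funext z; exact Qhat_encR Wz a M m z
  rw [h, klDiv_prod (fun _ => Qp (b := b) Wz a M m) (fun _ => Wz (xU ∅))
    (fun _ => Qp_isDist hb Wz hWz a M m) (fun _ => Qp_absCont Wz hAC a M m)]
  simp

/-- First-order expansion for the random code letter. -/
lemma first_order_xin {K b : ℕ} (hb : 0 < b) (a M : Fin K → ℕ) (hab : ∀ k, a k ≤ b)
    (m : ∀ k, Fin (M k)) (F : (Fin K → Bool) → ℝ) (B : ℝ) (hF : ∀ x, |F x| ≤ B) :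
    |av (fun c : ∀ k, Fin (M k) → Fin b => F (xin a M m c)) - F (xU ∅)
        - ∑ k, ((a k : ℝ) / b) * (F (xU {k}) - F (xU ∅))|
      ≤ (2 * B + 2 * B * K) * (∑ k, (a k : ℝ) / b) ^ 2 := by
  have : Nonempty (Fin b) := ⟨⟨0, hb⟩⟩
  have h := first_order (Ω := fun k => Fin (M k) → Fin b)
    (fun k c => decide ((c (m k) : ℕ) < a k)) F B hF
  simp_rw [av_ind _ hb (hab _)] at h
  exact h

/-! ### Achievability: decoding -/

/-- Per-letter likelihood ratio of user `k`. -/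
def wt {K : ℕ} {Y : Type*} (Wy : (Fin K → Bool) → Y → ℝ) (k : Fin K) (x : Bool) (y : Y) : ℝ :=
  if x then Wy (xU {k}) y / Wy (xU ∅) y else 1

/-- The score of a message. -/
def score {K n b : ℕ} {Y : Type*} (Wy : (Fin K → Bool) → Y → ℝ) (k : Fin K) (a N : ℕ)
    (c : Fin n → Fin N → Fin b) (y : Fin n → Y) (m : Fin N) : ℝ :=
  ∏ j, wt Wy k (decide ((c j m : ℕ) < a)) (y j)

/-- Threshold decoder. -/
def decR {K : ℕ} {Y : Type*} (Wy : (Fin K → Bool) → Y → ℝ) (n b : ℕ) (a M : Fin K → ℕ)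
    (hM : ∀ k, 0 < M k) (τ : Fin K → ℝ) (y : Fin n → Y) (l : ∀ k, Fin (Lr n b (M k))) (k : Fin K) :
    Fin (M k) :=
  if h : ∃ m : Fin (M k), Real.exp (τ k) ≤ score Wy k (a k) (M k) (ev n b (M k) (l k)) y m
  then h.choose else ⟨0, hM k⟩

lemma wt_nonneg {K : ℕ} {Y : Type*} [Fintype Y] (Wy : (Fin K → Bool) → Y → ℝ)
    (hWy : ∀ x, IsDist (Wy x)) (k : Fin K) (x : Bool) (y : Y) : 0 ≤ wt Wy k x y := by
  unfold wt
  split_ifs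
  · exact div_nonneg ((hWy _).1 _) ((hWy _).1 _)
  · exact zero_le_one

lemma score_nonneg {K n b : ℕ} {Y : Type*} [Fintype Y] (Wy : (Fin K → Bool) → Y → ℝ)
    (hWy : ∀ x, IsDist (Wy x)) (k : Fin K) (a N : ℕ)
    (c : Fin n → Fin N → Fin b) (y : Fin n → Y) (m : Fin N) : 0 ≤ score Wy k a N c y m :=
  Finset.prod_nonneg fun _ _ => wt_nonneg Wy hWy k _ _

lemma wt_pos {K : ℕ} {Y : Type*} [Fintype Y] (Wy : (Fin K → Bool) → Y → ℝ)
    (hWy : ∀ x, IsDist (Wy x))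
    (hACy : ∀ U : Finset (Fin K), U.Nonempty → ∀ k ∈ U,
      AbsCont (Wy (xU U)) (Wy (xU {k})) ∧ AbsCont (Wy (xU {k})) (Wy (xU ∅)))
    (k : Fin K) (x : Fin K → Bool) (y : Y) (h : Wy x y ≠ 0) : 0 < wt Wy k (x k) y := by
  refine lt_of_le_of_ne (wt_nonneg Wy hWy k _ _) (Ne.symm ?_)
  unfold wt
  split_ifs with hx
  · obtain ⟨U, rfl⟩ := exists_xU x
    have hkU : k ∈ U := by simpa [xU] using hx
    have h1 := hACy U ⟨k, hkU⟩ k hkU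
    have h2 : Wy (xU {k}) y ≠ 0 := fun h' => h (h1.1 y h')
    have h3 : Wy (xU ∅) y ≠ 0 := fun h' => h2 (h1.2 y h')
    exact div_ne_zero h2 h3
  · exact one_ne_zero

/-- Indicator bound for the decoder error event. -/
lemma dec_error {K : ℕ} {Y : Type*} [Fintype Y] (Wy : (Fin K → Bool) → Y → ℝ)
    (hWy : ∀ x, IsDist (Wy x)) (n b : ℕ) (a M : Fin K → ℕ)
    (hM : ∀ k, 0 < M k) (τ : Fin K → ℝ) (y : Fin n → Y) (l : ∀ k, Fin (Lr n b (M k)))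
    (m : ∀ k, Fin (M k)) :
    (if decR Wy n b a M hM τ y l = m then (0 : ℝ) else 1) ≤
      ∑ k ∈ Finset.univ.filter (fun k => M k ≠ 1),
        ((if score Wy k (a k) (M k) (ev n b (M k) (l k)) y (m k) < Real.exp (τ k)
            then (1 : ℝ) else 0)
          + ∑ m' ∈ Finset.univ.erase (m k), Real.exp (-τ k) *
            score Wy k (a k) (M k) (ev n b (M k) (l k)) y m') := by
  have hs0 : ∀ k m', 0 ≤ Real.exp (-τ k) *
            score Wy k (a k) (M k) (ev n b (M k) (l k)) y m' := fun k m' =>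
    mul_nonneg (Real.exp_pos _).le (score_nonneg Wy hWy _ _ _ _ _ _)
  have hS0 : ∀ k, 0 ≤ ∑ m' ∈ Finset.univ.erase (m k), Real.exp (-τ k) *
            score Wy k (a k) (M k) (ev n b (M k) (l k)) y m' := fun k =>
    Finset.sum_nonneg fun m' _ => hs0 k m'
  have hI0 : ∀ k, (0 : ℝ) ≤ (if score Wy k (a k) (M k) (ev n b (M k) (l k)) y (m k)
      < Real.exp (τ k) then (1 : ℝ) else 0) := fun k => by split_ifs <;> norm_num
  split_ifs with h
  · exact Finset.sum_nonneg fun k _ => add_nonneg (hI0 k) (hS0 k)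
  · obtain ⟨k, hk⟩ := Function.ne_iff.mp h
    have hMk : M k ≠ 1 := by
      intro h1
      apply hk
      apply Fin.ext
      have h2 := (decR Wy n b a M hM τ y l k).isLt
      have h3 := (m k).isLt
      omega
    refine le_trans ?_ (Finset.single_le_sum (fun k _ => add_nonneg (hI0 k) (hS0 k))
      (Finset.mem_filter.mpr ⟨Finset.mem_univ k, hMk⟩))
    by_cases hsc : score Wy k (a k) (M k) (ev n b (M k) (l k)) y (m k) < Real.exp (τ k)
    · rw [if_pos hsc]
      linarith [hS0 k]
    · rw [if_neg hsc, zero_add]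
      have hex : ∃ m : Fin (M k), Real.exp (τ k) ≤
          score Wy k (a k) (M k) (ev n b (M k) (l k)) y m := ⟨m k, not_lt.mp hsc⟩
      unfold decR at hk
      rw [dif_pos hex] at hk
      refine le_trans ?_ (Finset.single_le_sum (fun m' _ => hs0 k m')
        (Finset.mem_erase.mpr ⟨hk, Finset.mem_univ _⟩))
      have h5 := mul_le_mul_of_nonneg_left hex.choose_spec (Real.exp_pos (-τ k)).le
      rwa [← Real.exp_add, neg_add_cancel, Real.exp_zero] at h5

/-- Chernoff bound for the true message. -/
lemma true_bound {K : ℕ} {Y : Type*} [Fintype Y] (Wy : (Fin K → Bool) → Y → ℝ)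
    (hWy : ∀ x, IsDist (Wy x))
    (hACy : ∀ U : Finset (Fin K), U.Nonempty → ∀ k ∈ U,
      AbsCont (Wy (xU U)) (Wy (xU {k})) ∧ AbsCont (Wy (xU {k})) (Wy (xU ∅)))
    (n b : ℕ) (a M : Fin K → ℕ) (k : Fin K) (m : ∀ k, Fin (M k)) (τ s : ℝ) (hs : 0 ≤ s) :
    av (fun c : Fin n → ∀ k, Fin (M k) → Fin b => ∑ y : Fin n → Y,
      (∏ j, Wy (xin a M m (c j)) (y j)) *
      (if score Wy k (a k) (M k) (fun j => c j k) y (m k) < Real.exp τ then (1 : ℝ) else 0))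
    ≤ Real.exp (s * τ) * (av (fun c : ∀ k, Fin (M k) → Fin b =>
        ∑ y, Wy (xin a M m c) y * Real.exp (-s * Real.log (wt Wy k (xin a M m c k) y)))) ^ n := by
  have h1 : Real.exp (s * τ) * (av (fun c : ∀ k, Fin (M k) → Fin b =>
        ∑ y, Wy (xin a M m c) y * Real.exp (-s * Real.log (wt Wy k (xin a M m c k) y)))) ^ n
      = av (fun c : Fin n → ∀ k, Fin (M k) → Fin b => ∑ y : Fin n → Y,
        Real.exp (s * τ) * ∏ j, (Wy (xin a M m (c j)) (y j) *
          Real.exp (-s * Real.log (wt Wy k (xin a M m (c j) k) (y j))))) := by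
    simp_rw [← Finset.mul_sum]
    rw [av_mul_left]
    congr 1
    have h2 : ∀ c : Fin n → ∀ k, Fin (M k) → Fin b,
        ∑ y : Fin n → Y, ∏ j, (Wy (xin a M m (c j)) (y j) *
          Real.exp (-s * Real.log (wt Wy k (xin a M m (c j) k) (y j))))
        = ∏ j, ∑ y, Wy (xin a M m (c j)) y *
          Real.exp (-s * Real.log (wt Wy k (xin a M m (c j) k) y)) := fun c =>
      sum_prod_pi (fun j y => Wy (xin a M m (c j)) y *
          Real.exp (-s * Real.log (wt Wy k (xin a M m (c j) k) y)))
    simp_rw [h2]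
    rw [av_pi_prod (fun (_ : Fin n) (c : ∀ k, Fin (M k) → Fin b) => ∑ y, Wy (xin a M m c) y *
          Real.exp (-s * Real.log (wt Wy k (xin a M m c k) y)))]
    simp
  rw [h1]
  refine av_mono fun c => Finset.sum_le_sum fun y _ => ?_
  rw [Finset.prod_mul_distrib, mul_left_comm]
  by_cases h0 : ∏ j, Wy (xin a M m (c j)) (y j) = 0
  · simp [h0]
  · refine mul_le_mul_of_nonneg_left ?_ (Finset.prod_nonneg fun j _ => (hWy _).1 _)
    have h3 : ∀ j, 0 < wt Wy k (xin a M m (c j) k) (y j) := fun j =>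
      wt_pos Wy hWy hACy k _ _ (Finset.prod_ne_zero_iff.mp h0 j (Finset.mem_univ j))
    rw [← Real.exp_sum, ← Real.exp_add, ← Finset.mul_sum,
      ← Real.log_prod (fun j _ => (h3 j).ne')]
    split_ifs with hsc
    · have h4 : 0 < score Wy k (a k) (M k) (fun j => c j k) y (m k) :=
        Finset.prod_pos fun j _ => h3 j
      have h5 : Real.log (score Wy k (a k) (M k) (fun j => c j k) y (m k)) ≤ τ := by
        rw [← Real.log_exp τ]
        exact Real.log_le_log h4 hsc.le
      have h6 : Real.log (∏ j, wt Wy k (xin a M m (c j) k) (y j)) ≤ τ := h5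
      rw [← Real.exp_zero]
      refine Real.exp_le_exp.mpr ?_
      nlinarith
    · exact (Real.exp_pos _).le

/-- Expected score of a wrong message. -/
lemma wrong_bound {K : ℕ} {Y : Type*} [Fintype Y] (Wy : (Fin K → Bool) → Y → ℝ)
    (hWy : ∀ x, IsDist (Wy x)) (n b : ℕ) (hb : 0 < b) (a M : Fin K → ℕ) (k : Fin K)
    (hab : a k ≤ b)
    (m : ∀ k, Fin (M k)) (m' : Fin (M k)) (hm : m' ≠ m k) :
    av (fun c : Fin n → ∀ k, Fin (M k) → Fin b => ∑ y : Fin n → Y,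
      (∏ j, Wy (xin a M m (c j)) (y j)) * score Wy k (a k) (M k) (fun j => c j k) y m')
    = (1 - (a k : ℝ) / b + (a k : ℝ) / b * av (fun c : ∀ k, Fin (M k) → Fin b =>
        ∑ y, Wy (xin a M m c) y * wt Wy k true y)) ^ n := by
  have : Nonempty (Fin b) := ⟨⟨0, hb⟩⟩
  have h1 : ∀ c : Fin n → ∀ k, Fin (M k) → Fin b,
      ∑ y : Fin n → Y, (∏ j, Wy (xin a M m (c j)) (y j)) *
        score Wy k (a k) (M k) (fun j => c j k) y m'
      = ∏ j, ∑ y, Wy (xin a M m (c j)) y * wt Wy k (decide ((c j k m' : ℕ) < a k)) y := by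
    intro c
    rw [← sum_prod_pi (fun j y => Wy (xin a M m (c j)) y *
      wt Wy k (decide ((c j k m' : ℕ) < a k)) y)]
    refine Finset.sum_congr rfl fun y _ => ?_
    rw [Finset.prod_mul_distrib]
    rfl
  simp_rw [h1]
  rw [av_pi_prod (fun (_ : Fin n) (c : ∀ k, Fin (M k) → Fin b) =>
    ∑ y, Wy (xin a M m c) y * wt Wy k (decide ((c k m' : ℕ) < a k)) y)]
  rw [Finset.prod_const, Finset.card_univ, Fintype.card_fin]
  congr 1
  have h2 : ∀ c : ∀ k, Fin (M k) → Fin b, ∀ d : Fin (M k) → Fin b, ∀ e : Fin b,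
      xin a M m (Function.update c k (Function.update d m' e))
        = xin a M m (Function.update c k d) := by
    intro c d e
    funext i
    unfold xin
    by_cases hi : i = k
    · subst hi
      simp [Function.update_of_ne hm.symm]
    · simp [Function.update_of_ne hi]
  have h3 : ∀ (x : Fin K → Bool),
      av (fun e : Fin b => ∑ y, Wy x y * wt Wy k (decide ((e : ℕ) < a k)) y)
      = 1 - (a k : ℝ) / b + (a k : ℝ) / b * ∑ y, Wy x y * wt Wy k true y := by
    intro x
    have h4 : ∀ e : Fin b, ∑ y, Wy x y * wt Wy k (decide ((e : ℕ) < a k)) y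
        = 1 + ind (decide ((e : ℕ) < a k)) * ((∑ y, Wy x y * wt Wy k true y) - 1) := by
      intro e
      unfold ind
      split_ifs with h
      · rw [h]; ring
      · rw [Bool.not_eq_true] at h
        rw [h]
        simp [wt, (hWy x).2]
    simp_rw [h4]
    rw [av_add, av_const, av_mul_right]
    have h5 := av_ind (N := 1) (a k) hb hab 0
    rw [av_coord (Ω := fun _ : Fin 1 => Fin b) 0
      (fun e : Fin b => ind (decide ((e : ℕ) < a k)))] at h5
    rw [h5]; ring
  have h6 : av (fun c : ∀ k, Fin (M k) → Fin b =>
      ∑ y, Wy (xin a M m c) y * wt Wy k (decide ((c k m' : ℕ) < a k)) y)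
      = av (fun c : ∀ k, Fin (M k) → Fin b =>
        (1 - (a k : ℝ) / b + (a k : ℝ) / b * ∑ y, Wy (xin a M m c) y * wt Wy k true y)) := by
    rw [av_update k, av_update (Ω := fun k => Fin (M k) → Fin b) k (fun c =>
        (1 - (a k : ℝ) / b + (a k : ℝ) / b * ∑ y, Wy (xin a M m c) y * wt Wy k true y))]
    congr 1
    funext c
    rw [av_update (Ω := fun _ : Fin (M k) => Fin b) m']
    congr 1
    funext d
    simp only [Function.update_self, h2]
    exact h3 _
  rw [h6, av_add, av_const, av_mul_left]

lemma Pe_encR_le {K : ℕ} {Y : Type*} [Fintype Y] (Wy : (Fin K → Bool) → Y → ℝ)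
    (hWy : ∀ x, IsDist (Wy x))
    (hACy : ∀ U : Finset (Fin K), U.Nonempty → ∀ k ∈ U,
      AbsCont (Wy (xU U)) (Wy (xU {k})) ∧ AbsCont (Wy (xU {k})) (Wy (xU ∅)))
    (n b : ℕ) (hb : 0 < b) (a M : Fin K → ℕ) (hab : ∀ k, a k ≤ b)
    (hM : ∀ k, 0 < M k) (τ s : Fin K → ℝ) (hs : ∀ k, 0 ≤ s k) (g1 g2 : Fin K → ℝ)
    (hg1 : ∀ k, ∀ m : ∀ k, Fin (M k), (av (fun c : ∀ k, Fin (M k) → Fin b =>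
        ∑ y, Wy (xin a M m c) y * Real.exp (-s k * Real.log (wt Wy k (xin a M m c k) y)))) ≤ g1 k)
    (hg2 : ∀ k, ∀ m : ∀ k, Fin (M k),
      1 - (a k : ℝ) / b + (a k : ℝ) / b * av (fun c : ∀ k, Fin (M k) → Fin b =>
        ∑ y, Wy (xin a M m c) y * wt Wy k true y) ≤ g2 k) :
    Pe Wy M (fun k => Lr n b (M k)) (encR n b a M) (decR Wy n b a M hM τ)
      ≤ ∑ k ∈ Finset.univ.filter (fun k => M k ≠ 1),
        (Real.exp (s k * τ k) * g1 k ^ n + M k * (Real.exp (-τ k) * g2 k ^ n)) := by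
  unfold Pe prodChannel
  rw [av_code2 M (fun k => Lr n b (M k)) (fun m l => ∑ y : Fin n → Y,
      (∏ j, Wy (fun k => encR n b a M k (m k, l k) j) (y j)) *
        (if decR Wy n b a M hM τ y l = m then (0 : ℝ) else 1))]
  have hne : Nonempty (∀ k, Fin (M k)) := ⟨fun k => ⟨0, hM k⟩⟩
  rw [← av_const (Ω := ∀ k, Fin (M k)) (∑ k ∈ Finset.univ.filter (fun k => M k ≠ 1),
        (Real.exp (s k * τ k) * g1 k ^ n + M k * (Real.exp (-τ k) * g2 k ^ n)))]
  refine av_mono fun m => ?_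
  set E : (Fin n → ∀ k, Fin (M k) → Fin b) → (Fin n → Y) → Fin K → ℝ := fun c y k =>
    ((if score Wy k (a k) (M k) (fun j => c j k) y (m k) < Real.exp (τ k)
            then (1 : ℝ) else 0)
          + ∑ m' ∈ Finset.univ.erase (m k), Real.exp (-τ k) *
            score Wy k (a k) (M k) (fun j => c j k) y m') with hE
  have h1 : av (fun l : ∀ k, Fin (Lr n b (M k)) => ∑ y : Fin n → Y,
      (∏ j, Wy (fun k => encR n b a M k (m k, l k) j) (y j)) *
        (if decR Wy n b a M hM τ y l = m then (0 : ℝ) else 1))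
      ≤ av (fun c : Fin n → ∀ k, Fin (M k) → Fin b => ∑ y : Fin n → Y,
        (∏ j, Wy (xin a M m (c j)) (y j)) *
          ∑ k ∈ Finset.univ.filter (fun k => M k ≠ 1), E c y k) := by
    rw [← av_key n b M]
    refine av_mono fun l => Finset.sum_le_sum fun y _ => ?_
    refine mul_le_mul_of_nonneg_left ?_ (Finset.prod_nonneg fun j _ => (hWy _).1 _)
    exact dec_error Wy hWy n b a M hM τ y l m
  refine h1.trans ?_
  have h2 : av (fun c : Fin n → ∀ k, Fin (M k) → Fin b => ∑ y : Fin n → Y,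
        (∏ j, Wy (xin a M m (c j)) (y j)) *
          ∑ k ∈ Finset.univ.filter (fun k => M k ≠ 1), E c y k)
      = ∑ k ∈ Finset.univ.filter (fun k => M k ≠ 1),
        av (fun c : Fin n → ∀ k, Fin (M k) → Fin b => ∑ y : Fin n → Y,
        (∏ j, Wy (xin a M m (c j)) (y j)) * E c y k) := by
    rw [← av_sum]
    congr 1
    funext c
    simp_rw [Finset.mul_sum]
    rw [Finset.sum_comm]
  rw [h2]
  refine Finset.sum_le_sum fun k _ => ?_
  have h3 : av (fun c : Fin n → ∀ k, Fin (M k) → Fin b => ∑ y : Fin n → Y,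
        (∏ j, Wy (xin a M m (c j)) (y j)) * E c y k)
      = av (fun c : Fin n → ∀ k, Fin (M k) → Fin b => ∑ y : Fin n → Y,
          (∏ j, Wy (xin a M m (c j)) (y j)) *
          (if score Wy k (a k) (M k) (fun j => c j k) y (m k) < Real.exp (τ k)
            then (1 : ℝ) else 0))
        + ∑ m' ∈ Finset.univ.erase (m k), Real.exp (-τ k) *
          av (fun c : Fin n → ∀ k, Fin (M k) → Fin b => ∑ y : Fin n → Y,
          (∏ j, Wy (xin a M m (c j)) (y j)) *
            score Wy k (a k) (M k) (fun j => c j k) y m') := by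
    simp_rw [← av_mul_left]
    rw [← av_sum, ← av_add]
    congr 1
    funext c
    simp only [hE]
    simp_rw [mul_add, Finset.sum_add_distrib]
    congr 1
    simp_rw [Finset.mul_sum]
    rw [Finset.sum_comm]
    refine Finset.sum_congr rfl fun m' _ => Finset.sum_congr rfl fun y _ => ?_
    ring
  rw [h3]
  refine add_le_add ?_ ?_
  · refine (true_bound Wy hWy hACy n b a M k m (τ k) (s k) (hs k)).trans ?_
    refine mul_le_mul_of_nonneg_left ?_ (Real.exp_pos _).le
    refine pow_le_pow_left₀ ?_ (hg1 k m) n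
    exact av_nonneg fun c => Finset.sum_nonneg fun y _ =>
      mul_nonneg ((hWy _).1 _) (Real.exp_pos _).le
  · have hbpos : (0 : ℝ) < b := by exact_mod_cast hb
    have h4 : (a k : ℝ) / b ≤ 1 := by
      rw [div_le_one hbpos]; exact_mod_cast hab k
    have h5 : 0 ≤ 1 - (a k : ℝ) / b + (a k : ℝ) / b * av (fun c : ∀ k, Fin (M k) → Fin b =>
        ∑ y, Wy (xin a M m c) y * wt Wy k true y) := by
      refine add_nonneg (by linarith) (mul_nonneg (by positivity) ?_)
      exact av_nonneg fun c => Finset.sum_nonneg fun y _ =>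
        mul_nonneg ((hWy _).1 _) (wt_nonneg Wy hWy _ _ _)
    have h6 : 0 ≤ g2 k := h5.trans (hg2 k m)
    calc _ ≤ ∑ m' ∈ Finset.univ.erase (m k), Real.exp (-τ k) * g2 k ^ n := by
          refine Finset.sum_le_sum fun m' hm' => ?_
          refine mul_le_mul_of_nonneg_left ?_ (Real.exp_pos _).le
          rw [wrong_bound Wy hWy n b hb a M k (hab k) m m' (Finset.mem_erase.mp hm').1]
          exact pow_le_pow_left₀ h5 (hg2 k m) n
      _ ≤ ∑ m' : Fin (M k), Real.exp (-τ k) * g2 k ^ n :=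
          Finset.sum_le_sum_of_subset_of_nonneg (Finset.erase_subset _ _) fun _ _ _ => by
            positivity
      _ = _ := by simp

/-! ### Achievability: asymptotics -/

/-- Moment generating function of the negative log-likelihood ratio. -/
def phi {K : ℕ} {Y : Type*} [Fintype Y] (Wy : (Fin K → Bool) → Y → ℝ) (k : Fin K) (s : ℝ) : ℝ :=
  ∑ y, Wy (xU {k}) y * Real.exp (-s * Real.log (Wy (xU {k}) y / Wy (xU ∅) y))

lemma phi_choice {K : ℕ} {Y : Type*} [Fintype Y] (Wy : (Fin K → Bool) → Y → ℝ)
    (hWy : ∀ x, IsDist (Wy x)) (k : Fin K) (ρ t : ℝ)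
    (h : t < ρ * klDiv (Wy (xU {k})) (Wy (xU ∅))) :
    ∃ s, 0 ≤ s ∧ s * t + ρ * (phi Wy k s - 1) < 0 := by
  have h0 : phi Wy k 0 = 1 := by simp [phi, (hWy _).2]
  have hd : HasDerivAt (phi Wy k) (-klDiv (Wy (xU {k})) (Wy (xU ∅))) 0 := by
    unfold phi
    have h1 : ∀ y ∈ (Finset.univ : Finset Y), HasDerivAt (fun s : ℝ => Wy (xU {k}) y *
        Real.exp (-s * Real.log (Wy (xU {k}) y / Wy (xU ∅) y)))
        (-(Wy (xU {k}) y * Real.log (Wy (xU {k}) y / Wy (xU ∅) y))) 0 := by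
      intro y _
      have h2 := ((((hasDerivAt_id (0 : ℝ)).neg.mul_const
        (Real.log (Wy (xU {k}) y / Wy (xU ∅) y))).exp).const_mul (Wy (xU {k}) y))
      refine HasDerivAt.congr_deriv h2 ?_
      simp
    have h3 := HasDerivAt.fun_sum h1
    refine HasDerivAt.congr_deriv h3 ?_
    simp [klDiv]
  have hg : HasDerivAt (fun s => s * t + ρ * (phi Wy k s - 1))
      (1 * t + ρ * (-klDiv (Wy (xU {k})) (Wy (xU ∅)))) 0 :=
    ((hasDerivAt_id (0 : ℝ)).mul_const t).add ((hd.sub_const 1).const_mul ρ)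
  have hneg : 1 * t + ρ * (-klDiv (Wy (xU {k})) (Wy (xU ∅))) < 0 := by linarith
  have hsl := hg.hasDerivWithinAt (s := Set.Ioi 0)
  rw [hasDerivWithinAt_iff_tendsto_slope' (by simp)] at hsl
  have hev := hsl.eventually_lt_const hneg
  obtain ⟨s, hs1, hs2⟩ := (hev.and self_mem_nhdsWithin).exists
  have hs3 : (0 : ℝ) < s := hs2
  refine ⟨s, hs3.le, ?_⟩
  rw [slope_def_field] at hs1
  simp only [h0, zero_mul, sub_self, mul_zero, add_zero, sub_zero] at hs1
  by_contra hcon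
  have := div_nonneg (not_lt.mp hcon) hs3.le
  linarith

lemma g1_bound {K : ℕ} {Y : Type*} [Fintype Y] (Wy : (Fin K → Bool) → Y → ℝ)
    (hWy : ∀ x, IsDist (Wy x)) (k : Fin K) (s : ℝ) :
    ∃ C, ∀ (b : ℕ) (_ : 0 < b) (a M : Fin K → ℕ) (_ : ∀ k, a k ≤ b) (m : ∀ k, Fin (M k)),
      (av (fun c : ∀ k, Fin (M k) → Fin b =>
        ∑ y, Wy (xin a M m c) y * Real.exp (-s * Real.log (wt Wy k (xin a M m c k) y))))
      ≤ 1 + ((a k : ℝ) / b) * (phi Wy k s - 1) + C * (∑ k, (a k : ℝ) / b) ^ 2 := by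
  set F : (Fin K → Bool) → ℝ := fun x =>
    ∑ y, Wy x y * Real.exp (-s * Real.log (wt Wy k (x k) y)) with hF
  have hB : ∀ x, |F x| ≤ ∑ x', |F x'| := fun x =>
    Finset.single_le_sum (f := fun x => |F x|) (fun _ _ => abs_nonneg _) (Finset.mem_univ x)
  refine ⟨2 * (∑ x', |F x'|) + 2 * (∑ x', |F x'|) * K, fun b hb a M hab m => ?_⟩
  have h := (abs_le.mp (first_order_xin hb a M hab m F _ hB)).2
  have hF0 : ∀ x : Fin K → Bool, x k = false → F x = 1 := by
    intro x hx
    simp [hF, hx, wt, (hWy x).2]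
  have hF1 : F (xU {k}) = phi Wy k s := by
    simp [hF, phi, wt, xU]
  have hFe : F (xU ∅) = 1 := hF0 _ (by simp [xU])
  have hsum : ∑ i, ((a i : ℝ) / b) * (F (xU {i}) - F (xU ∅))
      = ((a k : ℝ) / b) * (phi Wy k s - 1) := by
    rw [Finset.sum_eq_single k]
    · rw [hF1, hFe]
    · intro i _ hi
      rw [hF0 (xU {i}) (by simp [xU, hi.symm]), hFe]; simp
    · simp
  rw [hsum, hFe] at h
  have h2 : (av (fun c : ∀ k, Fin (M k) → Fin b =>
        ∑ y, Wy (xin a M m c) y * Real.exp (-s * Real.log (wt Wy k (xin a M m c k) y))))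
      = av (fun c : ∀ k, Fin (M k) → Fin b => F (xin a M m c)) := rfl
  rw [h2]
  linarith

lemma g2_bound {K : ℕ} {Y : Type*} [Fintype Y] (Wy : (Fin K → Bool) → Y → ℝ)
    (hWy : ∀ x, IsDist (Wy x)) (k : Fin K) (hAC : AbsCont (Wy (xU {k})) (Wy (xU ∅))) :
    ∃ C, ∀ (b : ℕ) (_ : 0 < b) (a M : Fin K → ℕ) (_ : ∀ k, a k ≤ b) (m : ∀ k, Fin (M k)),
      (∑ k, (a k : ℝ) / b) ≤ 1 →
      1 - (a k : ℝ) / b + (a k : ℝ) / b * av (fun c : ∀ k, Fin (M k) → Fin b =>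
        ∑ y, Wy (xin a M m c) y * wt Wy k true y)
      ≤ 1 + C * (∑ k, (a k : ℝ) / b) ^ 2 := by
  set F : (Fin K → Bool) → ℝ := fun x => ∑ y, Wy x y * wt Wy k true y with hF
  set B : ℝ := ∑ x', |F x'| with hBdef
  have hB : ∀ x, |F x| ≤ B := fun x =>
    Finset.single_le_sum (f := fun x => |F x|) (fun _ _ => abs_nonneg _) (Finset.mem_univ x)
  have hB0 : 0 ≤ B := (abs_nonneg _).trans (hB (xU ∅))
  refine ⟨2 * B + (2 * B + 2 * B * K), fun b hb a M hab m hμ => ?_⟩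
  have h := (abs_le.mp (first_order_xin hb a M hab m F B hB)).2
  have hFe : F (xU ∅) = 1 := by
    simp only [hF]
    rw [← (hWy (xU {k})).2]
    refine Finset.sum_congr rfl fun y _ => ?_
    by_cases hy : Wy (xU ∅) y = 0
    · rw [hy, hAC y hy, zero_mul]
    · simp [wt]; field_simp
  have hp0 : ∀ i, 0 ≤ (a i : ℝ) / b := fun i => by positivity
  set μ : ℝ := ∑ k, (a k : ℝ) / b with hμd
  have hpμ : (a k : ℝ) / b ≤ μ :=
    Finset.single_le_sum (f := fun i => (a i : ℝ) / b) (fun i _ => hp0 i) (Finset.mem_univ k)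
  have hμ0 : 0 ≤ μ := (hp0 k).trans hpμ
  have hsum : ∑ i, ((a i : ℝ) / b) * (F (xU {i}) - F (xU ∅)) ≤ 2 * B * μ := by
    rw [hμd, Finset.mul_sum]
    refine Finset.sum_le_sum fun i _ => ?_
    rw [mul_comm]
    refine mul_le_mul_of_nonneg_right ?_ (hp0 i)
    have h1 := (abs_le.mp (hB (xU {i}))).2
    have h2 := (abs_le.mp (hB (xU ∅))).1
    linarith
  set A := av (fun c : ∀ k, Fin (M k) → Fin b => ∑ y, Wy (xin a M m c) y * wt Wy k true y) with hA
  rw [hFe] at h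
  rw [hFe] at hsum
  have hBK : 0 ≤ 2 * B + 2 * B * K := by positivity
  have h3 : A - 1 ≤ (2 * B + (2 * B + 2 * B * K)) * μ := by
    have : (2 * B + 2 * B * K) * μ ^ 2 ≤ (2 * B + 2 * B * K) * μ :=
      mul_le_mul_of_nonneg_left (by nlinarith) hBK
    linarith
  have h4 : (a k : ℝ) / b * (A - 1) ≤ (a k : ℝ) / b * ((2 * B + (2 * B + 2 * B * K)) * μ) :=
    mul_le_mul_of_nonneg_left h3 (hp0 k)
  have h5 : (a k : ℝ) / b * ((2 * B + (2 * B + 2 * B * K)) * μ)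
      ≤ μ * ((2 * B + (2 * B + 2 * B * K)) * μ) :=
    mul_le_mul_of_nonneg_right hpμ (by positivity)
  nlinarith

lemma exp_mul_tendsto {w e : ℕ → ℝ} {L : ℝ} (hw : Tendsto w atTop atTop) (hL : L < 0)
    (he : Tendsto e atTop (𝓝 L)) : Tendsto (fun n => Real.exp (w n * e n)) atTop (𝓝 0) :=
  Real.tendsto_exp_atBot.comp (hw.atTop_mul_neg hL he)

lemma pow_le_exp {x e : ℝ} (n : ℕ) (hx : 0 ≤ x) (h : x ≤ 1 + e) : x ^ n ≤ Real.exp (n * e) := by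
  rw [Real.exp_nat_mul]
  exact pow_le_pow_left₀ hx (by linarith [Real.add_one_le_exp e]) n

/-- The scale of the code. -/
def ww (n : ℕ) : ℝ := Real.sqrt (Real.sqrt n)

lemma ww_nonneg (n : ℕ) : 0 ≤ ww n := Real.sqrt_nonneg _

lemma ww_atTop : Tendsto ww atTop atTop :=
  Real.tendsto_sqrt_atTop.comp (Real.tendsto_sqrt_atTop.comp tendsto_natCast_atTop_atTop)

lemma ww_pow (n : ℕ) : (ww n) ^ 4 = n := by
  unfold ww
  have h1 := Real.sq_sqrt (Real.sqrt_nonneg (n : ℝ))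
  have h2 := Real.sq_sqrt (Nat.cast_nonneg n : (0 : ℝ) ≤ n)
  calc Real.sqrt (Real.sqrt (n : ℝ)) ^ 4 = (Real.sqrt (Real.sqrt (n : ℝ)) ^ 2) ^ 2 := by ring
    _ = (n : ℝ) := by rw [h1, h2]

lemma ww_sq_div : Tendsto (fun n : ℕ => ww n ^ 2 / n) atTop (𝓝 0) := by
  have h : Tendsto (fun n : ℕ => (ww n ^ 2)⁻¹) atTop (𝓝 0) :=
    ((tendsto_pow_atTop two_ne_zero).comp ww_atTop).inv_tendsto_atTop
  refine h.congr' ?_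
  filter_upwards [ww_atTop.eventually_gt_atTop 0] with n hn
  rw [← ww_pow n]; field_simp

lemma ww_div : Tendsto (fun n : ℕ => ww n / n) atTop (𝓝 0) := by
  have h := (ww_atTop.inv_tendsto_atTop).mul ww_sq_div
  rw [zero_mul] at h
  refine h.congr' ?_
  filter_upwards [ww_atTop.eventually_gt_atTop 0] with n hn
  simp only [Pi.inv_apply]; field_simp

lemma ww_le (n : ℕ) : ww n ≤ n + 1 := by
  unfold ww
  have hn : (0 : ℝ) ≤ n := Nat.cast_nonneg n
  rw [Real.sqrt_le_left (by positivity), Real.sqrt_le_left (by positivity)]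
  nlinarith [sq_nonneg (n : ℝ), mul_nonneg hn hn, mul_nonneg hn (mul_nonneg hn hn)]

lemma achiev {K : ℕ} {Y Z : Type*} [Fintype Y] [Fintype Z]
    (Wy : (Fin K → Bool) → Y → ℝ) (Wz : (Fin K → Bool) → Z → ℝ)
    (hWy : ∀ x, IsDist (Wy x)) (hWz : ∀ x, IsDist (Wz x))
    (hACz : ∀ x, AbsCont (Wz x) (Wz (xU ∅)))
    (hACy : ∀ U : Finset (Fin K), U.Nonempty → ∀ k ∈ U,
      AbsCont (Wy (xU U)) (Wy (xU {k})) ∧ AbsCont (Wy (xU {k})) (Wy (xU ∅)))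
    (ρ : Fin K → ℝ) (h0 : ∀ k, 0 ≤ ρ k) (h1 : ∑ k, ρ k = 1) (hchi : 0 < chiRho Wz ρ)
    (c : Fin K → ℝ) (hc0 : ∀ k, 0 ≤ c k)
    (hc : ∀ k, c k = 0 ∨ c k < ρ k * klDiv (Wy (xU {k})) (Wy (xU ∅))) :
    ∃ (M L : ℕ → Fin K → ℕ)
        (enc : ∀ n (k : Fin K), Fin (M n k) × Fin (L n k) → Fin n → Bool)
        (dec : ∀ n, (Fin n → Y) → (∀ k, Fin (L n k)) → ∀ k, Fin (M n k)),
        (∀ n k, 0 < M n k) ∧ (∀ n k, 0 < L n k) ∧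
        Tendsto (fun n => Pe Wy (M n) (L n) (enc n) (dec n)) atTop (𝓝 0) ∧
        Tendsto (fun n => deltaN Wz (M n) (L n) (enc n)) atTop (𝓝 0) ∧
        ∀ k, Tendsto (fun n => Real.log (M n k : ℝ) /
            Real.sqrt ((n : ℝ) * deltaN Wz (M n) (L n) (enc n))) atTop
              (𝓝 (c k * Real.sqrt (2 / chiRho Wz ρ))) := by
  have hts : ∀ k, ∃ t s, 0 ≤ s ∧ (c k ≠ 0 → c k < t ∧ s * t + ρ k * (phi Wy k s - 1) < 0) := by
    intro k
    rcases hc k with h | h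
    · exact ⟨0, 0, le_rfl, fun h' => absurd h h'⟩
    · obtain ⟨t, ht1, ht2⟩ := exists_between h
      obtain ⟨s, hs0, hs⟩ := phi_choice Wy hWy k (ρ k) t ht2
      exact ⟨t, s, hs0, fun _ => ⟨ht1, hs⟩⟩
  choose t s hs0 hts using hts
  choose C1 hC1 using fun k => g1_bound Wy hWy k (s k)
  choose C2 hC2 using fun k => g2_bound Wy hWy k (hACy {k} ⟨k, by simp⟩ k (by simp)).2
  set a : ℕ → Fin K → ℕ := fun n k => ⌊ρ k * ww n⌋₊ with ha
  set M : ℕ → Fin K → ℕ := fun n k => ⌊Real.exp (c k * ww n)⌋₊ with hMd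
  have hM : ∀ n k, 0 < M n k := by
    intro n k
    refine Nat.floor_pos.mpr (Real.one_le_exp (mul_nonneg (hc0 k) (ww_nonneg n)))
  have hb : ∀ n : ℕ, 0 < n + 1 := fun n => Nat.succ_pos n
  have hab : ∀ n k, a n k ≤ n + 1 := by
    intro n k
    refine Nat.floor_le_of_le ?_
    push_cast
    have h2 := simplex_le_one ρ h0 h1 k
    have h3 := ww_le n
    have h4 := ww_nonneg n
    nlinarith [h0 k]
  have hwpos : ∀ᶠ n in atTop, 0 < ww n := ww_atTop.eventually_gt_atTop 0
  set p : ℕ → Fin K → ℝ := fun n k => (a n k : ℝ) / ((n + 1 : ℕ) : ℝ) with hp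
  set μ : ℕ → ℝ := fun n => ∑ k, p n k with hμ
  have hp0 : ∀ n k, 0 ≤ p n k := fun n k => by simp only [hp]; positivity
  have hpl : ∀ k, Tendsto (fun n : ℕ => n * p n k / ww n) atTop (𝓝 (ρ k)) := by
    intro k
    have h2 : Tendsto (fun n : ℕ => ((⌊ρ k * ww n⌋₊ : ℕ) : ℝ) / ww n) atTop (𝓝 (ρ k)) :=
      (tendsto_nat_floor_mul_div_atTop (h0 k)).comp ww_atTop
    have h3 : Tendsto (fun n : ℕ => (n : ℝ) / ((n : ℝ) + 1)) atTop (𝓝 1) :=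
      tendsto_natCast_div_add_atTop (1 : ℝ)
    have h4 := h3.mul h2
    rw [one_mul] at h4
    refine h4.congr fun n => ?_
    simp only [hp, ha]; push_cast; ring
  have hμl : Tendsto (fun n : ℕ => n * μ n / ww n) atTop (𝓝 1) := by
    have h2 := tendsto_finsetSum (Finset.univ : Finset (Fin K)) fun k _ => hpl k
    rw [h1] at h2
    refine h2.congr fun n => ?_
    simp only [hμ]; rw [Finset.mul_sum, Finset.sum_div]
  have hμ0 : Tendsto μ atTop (𝓝 0) := by
    have h2 := hμl.mul ww_div
    rw [mul_zero] at h2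
    refine h2.congr' ?_
    filter_upwards [hwpos, eventually_gt_atTop 0] with n hn hn0
    have : (0 : ℝ) < n := by exact_mod_cast hn0
    field_simp
  have hμ1 : ∀ᶠ n in atTop, μ n ≤ 1 := hμ0.eventually_le_const (by norm_num)
  have hq : Tendsto (fun n : ℕ => n * μ n ^ 2 / ww n) atTop (𝓝 0) := by
    have h2 := hμl.mul hμ0
    rw [mul_zero] at h2
    refine h2.congr fun n => ?_
    ring
  have m0 : ∀ n k, Fin (M n k) := fun n k => ⟨0, hM n k⟩
  -- the covertness part
  set R : ℕ → Z → ℝ := fun n => Qp (b := n + 1) Wz (a n) (M n) (m0 n) with hR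
  have hδ : ∀ n, deltaN (n := n) Wz (M n) (fun k => Lr n (n + 1) (M n k))
      (encR n (n + 1) (a n) (M n)) = n * klDiv (R n) (Wz (xU ∅)) := fun n =>
    deltaN_encR (hb n) Wz hWz hACz (a n) (M n) (m0 n)
  have hv : ∀ z, Tendsto (fun n : ℕ => (R n z - Wz (xU ∅) z) / (ww n / n)) atTop
      (𝓝 (∑ k, ρ k * (Wz (xU {k}) z - Wz (xU ∅) z))) := by
    intro z
    have hB : ∀ x, |Wz x z| ≤ 1 := by
      intro x
      rw [abs_of_nonneg ((hWz x).1 z), ← (hWz x).2]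
      exact Finset.single_le_sum (fun i _ => (hWz x).1 i) (Finset.mem_univ z)
    have hfo : ∀ n, |R n z - Wz (xU ∅) z - ∑ k, p n k * (Wz (xU {k}) z - Wz (xU ∅) z)|
        ≤ (2 * 1 + 2 * 1 * K) * μ n ^ 2 := fun n =>
      first_order_xin (hb n) (a n) (M n) (hab n) (m0 n) (fun x => Wz x z) 1 hB
    have hmain : Tendsto (fun n : ℕ => ∑ k, (n * p n k / ww n) * (Wz (xU {k}) z - Wz (xU ∅) z))
        atTop (𝓝 (∑ k, ρ k * (Wz (xU {k}) z - Wz (xU ∅) z))) :=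
      tendsto_finsetSum _ fun k _ => (hpl k).mul_const _
    have herr : Tendsto (fun n : ℕ => (R n z - Wz (xU ∅) z
        - ∑ k, p n k * (Wz (xU {k}) z - Wz (xU ∅) z)) * (n / ww n)) atTop (𝓝 0) := by
      have hu := hq.const_mul (2 * 1 + 2 * 1 * (K : ℝ))
      rw [mul_zero] at hu
      refine squeeze_zero_norm (fun n => ?_) hu
      have h5 : (0 : ℝ) ≤ n / ww n := div_nonneg (Nat.cast_nonneg n) (ww_nonneg n)
      rw [Real.norm_eq_abs, abs_mul, abs_of_nonneg h5]
      refine (mul_le_mul_of_nonneg_right (hfo n) h5).trans (le_of_eq ?_)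
      ring
    have h6 := herr.add hmain
    rw [zero_add] at h6
    refine h6.congr fun n => ?_
    rw [div_div_eq_mul_div]
    have h7 : ∑ k, (n * p n k / ww n) * (Wz (xU {k}) z - Wz (xU ∅) z)
        = (∑ k, p n k * (Wz (xU {k}) z - Wz (xU ∅) z)) * (n / ww n) := by
      rw [Finset.sum_mul]
      exact Finset.sum_congr rfl fun k _ => by ring
    rw [h7]; ring
  have hκ : Tendsto (fun n : ℕ => klDiv (R n) (Wz (xU ∅)) / (ww n / n) ^ 2) atTop
      (𝓝 (chiRho Wz ρ / 2)) := by
    refine klDiv_asymp (Wz (xU ∅)) _ (hWz _) R (Eventually.of_forall fun n =>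
      Qp_isDist (hb n) Wz hWz _ _ _) (Eventually.of_forall fun n => Qp_absCont Wz hACz _ _ _)
      (fun n : ℕ => ww n / n) ?_ ww_div hv
    filter_upwards [hwpos, eventually_gt_atTop 0] with n hn hn0
    have : (0 : ℝ) < n := by exact_mod_cast hn0
    positivity
  refine ⟨M, fun n k => Lr n (n + 1) (M n k), fun n => encR n (n + 1) (a n) (M n),
    fun n => decR Wy n (n + 1) (a n) (M n) (hM n) (fun k => t k * ww n), hM,
    fun n k => Lr_pos _ _ _ (hb n), ?_, ?_, ?_⟩
  · -- error probability
    set g1 : ℕ → Fin K → ℝ := fun n k => 1 + (p n k * (phi Wy k (s k) - 1) + C1 k * μ n ^ 2)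
    set g2 : ℕ → Fin K → ℝ := fun n k => 1 + C2 k * μ n ^ 2
    set E : ℕ → Fin K → ℝ := fun n k => if c k = 0 then 0 else
      Real.exp (ww n * (s k * t k + (n * p n k / ww n) * (phi Wy k (s k) - 1)
        + C1 k * (n * μ n ^ 2 / ww n)))
      + Real.exp (ww n * (c k - t k + C2 k * (n * μ n ^ 2 / ww n))) with hE
    have hElim : Tendsto (fun n => ∑ k, E n k) atTop (𝓝 0) := by
      rw [← Finset.sum_const_zero (s := (Finset.univ : Finset (Fin K)))]
      refine tendsto_finsetSum _ fun k _ => ?_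
      simp only [hE]
      by_cases hck : c k = 0
      · simp [hck]
      · simp only [if_neg hck]
        obtain ⟨ht1, ht2⟩ := hts k hck
        have l1 : Tendsto (fun n : ℕ => s k * t k + (n * p n k / ww n) * (phi Wy k (s k) - 1)
            + C1 k * (n * μ n ^ 2 / ww n)) atTop
            (𝓝 (s k * t k + ρ k * (phi Wy k (s k) - 1) + C1 k * 0)) :=
          (((hpl k).mul_const _).const_add _).add (hq.const_mul _)
        have l2 : Tendsto (fun n : ℕ => c k - t k + C2 k * (n * μ n ^ 2 / ww n)) atTop
            (𝓝 (c k - t k + C2 k * 0)) := (hq.const_mul _).const_add _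
        have := (exp_mul_tendsto ww_atTop (by linarith) l1).add
          (exp_mul_tendsto ww_atTop (by linarith) l2)
        simpa using this
    have hPe0 : ∀ n, 0 ≤ Pe Wy (M n) (fun k => Lr n (n + 1) (M n k))
        (encR n (n + 1) (a n) (M n))
        (decR Wy n (n + 1) (a n) (M n) (hM n) (fun k => t k * ww n)) := by
      intro n
      unfold Pe prodChannel
      refine mul_nonneg (inv_nonneg.mpr (Finset.prod_nonneg fun k _ => by positivity)) ?_
      refine Finset.sum_nonneg fun m _ => Finset.sum_nonneg fun l _ => Finset.sum_nonneg fun y _ =>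
        mul_nonneg (Finset.prod_nonneg fun j _ => (hWy _).1 _) ?_
      split_ifs <;> norm_num
    refine tendsto_of_tendsto_of_tendsto_of_le_of_le' tendsto_const_nhds hElim
      (Eventually.of_forall hPe0) ?_
    filter_upwards [hwpos, hμ1] with n hn hμn
    have hg1 : ∀ k, ∀ m : ∀ k, Fin (M n k), (av (fun c : ∀ k, Fin (M n k) → Fin (n + 1) =>
        ∑ y, Wy (xin (a n) (M n) m c) y *
          Real.exp (-s k * Real.log (wt Wy k (xin (a n) (M n) m c k) y)))) ≤ g1 n k := by
      intro k m
      refine (hC1 k (n + 1) (hb n) (a n) (M n) (hab n) m).trans (le_of_eq ?_)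
      exact add_assoc _ _ _
    have hg2 : ∀ k, ∀ m : ∀ k, Fin (M n k),
      1 - (a n k : ℝ) / ((n + 1 : ℕ) : ℝ) + (a n k : ℝ) / ((n + 1 : ℕ) : ℝ) *
        av (fun c : ∀ k, Fin (M n k) → Fin (n + 1) =>
        ∑ y, Wy (xin (a n) (M n) m c) y * wt Wy k true y) ≤ g2 n k := fun k m =>
      hC2 k (n + 1) (hb n) (a n) (M n) (hab n) m hμn
    refine (Pe_encR_le Wy hWy hACy n (n + 1) (hb n) (a n) (M n) (hab n) (hM n)
      (fun k => t k * ww n) s hs0 (g1 n) (g2 n) hg1 hg2).trans ?_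
    have hE0 : ∀ k, 0 ≤ E n k := by
      intro k
      simp only [hE]
      split_ifs
      · exact le_rfl
      · positivity
    refine le_trans ?_ (Finset.sum_le_sum_of_subset_of_nonneg
      (Finset.filter_subset (fun k => M n k ≠ 1) Finset.univ) fun k _ _ => hE0 k)
    refine Finset.sum_le_sum fun k hk => ?_
    have hck : c k ≠ 0 := by
      intro h
      have h2 := (Finset.mem_filter.mp hk).2
      apply h2
      simp [hMd, h]
    have hg1n : 0 ≤ g1 n k := le_trans (av_nonneg fun c => Finset.sum_nonneg fun y _ =>
      mul_nonneg ((hWy _).1 _) (Real.exp_pos _).le) (hg1 k (m0 n))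
    have hg2n : 0 ≤ g2 n k := by
      refine le_trans ?_ (hg2 k (m0 n))
      have hbpos : (0 : ℝ) < ((n + 1 : ℕ) : ℝ) := by exact_mod_cast hb n
      have h4 : (a n k : ℝ) / ((n + 1 : ℕ) : ℝ) ≤ 1 := by
        rw [div_le_one hbpos]; exact_mod_cast hab n k
      refine add_nonneg (by linarith) (mul_nonneg (hp0 n k) ?_)
      exact av_nonneg fun c => Finset.sum_nonneg fun y _ =>
        mul_nonneg ((hWy _).1 _) (wt_nonneg Wy hWy _ _ _)
    simp only [hE, if_neg hck]
    refine add_le_add ?_ ?_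
    · refine (mul_le_mul_of_nonneg_left (pow_le_exp n hg1n le_rfl) (Real.exp_pos _).le).trans ?_
      rw [← Real.exp_add]
      refine le_of_eq (congrArg _ ?_)
      field_simp
      ring
    · have hMle : (M n k : ℝ) ≤ Real.exp (c k * ww n) := Nat.floor_le (Real.exp_pos _).le
      calc (M n k : ℝ) * (Real.exp (-(t k * ww n)) * g2 n k ^ n)
          ≤ Real.exp (c k * ww n) * (Real.exp (-(t k * ww n)) *
            Real.exp (n * (C2 k * μ n ^ 2))) := by
            refine mul_le_mul hMle ?_ (by positivity) (Real.exp_pos _).le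
            exact mul_le_mul_of_nonneg_left (pow_le_exp n hg2n le_rfl) (Real.exp_pos _).le
        _ = _ := by
            rw [← Real.exp_add, ← Real.exp_add]
            refine congrArg _ ?_
            field_simp
            ring
  · -- covertness
    have h2 := hκ.mul ww_sq_div
    rw [mul_zero] at h2
    refine h2.congr' ?_
    filter_upwards [hwpos, eventually_gt_atTop 0] with n hn hn0
    have : (0 : ℝ) < n := by exact_mod_cast hn0
    rw [hδ n]
    field_simp
  · intro k
    have hlog : Tendsto (fun n => Real.log (M n k) / ww n) atTop (𝓝 (c k)) := by
      have hlo : Tendsto (fun n => c k - Real.log 2 * (ww n)⁻¹) atTop (𝓝 (c k - Real.log 2 * 0)) :=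
        ((ww_atTop.inv_tendsto_atTop).const_mul _).const_sub _
      rw [mul_zero, sub_zero] at hlo
      refine tendsto_of_tendsto_of_tendsto_of_le_of_le' hlo tendsto_const_nhds ?_ ?_
      · filter_upwards [hwpos] with n hn
        have hM1 : (1 : ℝ) ≤ M n k := by exact_mod_cast hM n k
        have h3 : Real.exp (c k * ww n) < M n k + 1 := Nat.lt_floor_add_one _
        have h4 : Real.exp (c k * ww n) ≤ 2 * M n k := by linarith
        have h5 := Real.log_le_log (Real.exp_pos _) h4
        rw [Real.log_exp, Real.log_mul (by norm_num) (by linarith)] at h5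
        rw [le_div_iff₀ hn, sub_mul, mul_assoc, inv_mul_cancel₀ hn.ne']
        linarith
      · filter_upwards [hwpos] with n hn
        have hM1 : (0 : ℝ) < M n k := by exact_mod_cast hM n k
        have hMle : (M n k : ℝ) ≤ Real.exp (c k * ww n) := Nat.floor_le (Real.exp_pos _).le
        have h5 := Real.log_le_log hM1 hMle
        rw [Real.log_exp] at h5
        rwa [div_le_iff₀ hn]
    have hχ2 : 0 < chiRho Wz ρ / 2 := by positivity
    have h2 := hlog.div hκ.sqrt (Real.sqrt_pos.mpr hχ2).ne'
    have h3 : c k / Real.sqrt (chiRho Wz ρ / 2) = c k * Real.sqrt (2 / chiRho Wz ρ) := by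
      rw [div_eq_mul_inv, ← Real.sqrt_inv, inv_div]
    rw [h3] at h2
    refine h2.congr' ?_
    filter_upwards [hwpos, eventually_gt_atTop 0] with n hn hn0
    have hnr : (0 : ℝ) < n := by exact_mod_cast hn0
    rw [hδ n]
    have h4 : (n : ℝ) * (n * klDiv (R n) (Wz (xU ∅)))
        = ww n ^ 2 * (klDiv (R n) (Wz (xU ∅)) / (ww n / n) ^ 2) := by
      field_simp
    rw [h4, Real.sqrt_mul (sq_nonneg _), Real.sqrt_sq hn.le, ← div_div]
    rfl

/-- the covert capacity region of the `K`-user binary-input MAC: the closure of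
the set of achievable covert throughput tuples equals the union over `ρ` in the simplex of
the boxes `{r : 0 ≤ r_k ≤ √(2/χ(ρ)) ρ_k D(P_k‖P_∅)}`. -/
theorem covert_capacity_region (K : ℕ) (hK : 2 ≤ K)
    {Y Z : Type} [Fintype Y] [Fintype Z]
    (Wy : (Fin K → Bool) → Y → ℝ) (Wz : (Fin K → Bool) → Z → ℝ)
    (hWy : ∀ x, IsDist (Wy x)) (hWz : ∀ x, IsDist (Wz x))
    (hACz : ∀ U : Finset (Fin K), U.Nonempty → AbsCont (Wz (xU U)) (Wz (xU ∅)))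
    (hNC : ¬ ∃ lam : Finset (Fin K) → ℝ, (∀ T, 0 ≤ lam T) ∧ lam ∅ = 0 ∧
      (∑ T : Finset (Fin K), lam T) = 1 ∧
      ∀ z, Wz (xU (∅ : Finset (Fin K))) z = ∑ T : Finset (Fin K), lam T * Wz (xU T) z)
    (hACy : ∀ U : Finset (Fin K), U.Nonempty → ∀ k ∈ U,
      AbsCont (Wy (xU U)) (Wy (xU {k})) ∧ AbsCont (Wy (xU {k})) (Wy (xU ∅))) :
    closure {r : Fin K → ℝ |
      ∃ (M L : ℕ → Fin K → ℕ)
        (enc : ∀ n (k : Fin K), Fin (M n k) × Fin (L n k) → Fin n → Bool)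
        (dec : ∀ n, (Fin n → Y) → (∀ k, Fin (L n k)) → ∀ k, Fin (M n k)),
        (∀ n k, 0 < M n k) ∧ (∀ n k, 0 < L n k) ∧
        Tendsto (fun n => Pe Wy (M n) (L n) (enc n) (dec n)) atTop (𝓝 0) ∧
        Tendsto (fun n => deltaN Wz (M n) (L n) (enc n)) atTop (𝓝 0) ∧
        ∀ k, Tendsto (fun n => Real.log (M n k : ℝ) /
            Real.sqrt ((n : ℝ) * deltaN Wz (M n) (L n) (enc n))) atTop (𝓝 (r k))} =
    {r : Fin K → ℝ | ∃ ρ : Fin K → ℝ, (∀ k, ρ k ∈ Set.Icc (0 : ℝ) 1) ∧ (∑ k, ρ k) = 1 ∧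
      ∀ k, 0 ≤ r k ∧ r k ≤ Real.sqrt (2 / chiRho Wz ρ) *
        (ρ k * klDiv (Wy (xU {k})) (Wy (xU ∅)))} := by
  have hACz' : ∀ x, AbsCont (Wz x) (Wz (xU ∅)) := by
    intro x
    obtain ⟨U, rfl⟩ := exists_xU x
    rcases U.eq_empty_or_nonempty with h | h
    · subst h
      exact fun z hz => hz
    · exact hACz U h
  have hACy' : ∀ k, AbsCont (Wy (xU {k})) (Wy (xU ∅)) := fun k =>
    (hACy {k} ⟨k, by simp⟩ k (by simp)).2
  have hchi : ∀ ρ : Fin K → ℝ, (∀ k, 0 ≤ ρ k) → ∑ k, ρ k = 1 → 0 < chiRho Wz ρ :=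
    chi_pos Wz hWz hACz' hNC
  refine Set.Subset.antisymm ?_ ?_
  · change closure _ ⊆ region Wy Wz
    refine closure_minimal ?_ (region_closed Wy Wz hchi)
    rintro r ⟨M, L, enc, dec, hM, hL, hPe, hδ, hr⟩
    exact converse_main hK Wy Wz hWy hWz hACz' hNC hACy' r M L hM hL enc dec hPe hδ hr
  · rintro r ⟨ρ, hρ, hρ1, hr⟩
    have hχ : 0 < chiRho Wz ρ := hchi ρ (fun k => (hρ k).1) hρ1
    set q : ℝ := Real.sqrt (2 / chiRho Wz ρ) with hq
    have hq0 : 0 < q := Real.sqrt_pos.mpr (by positivity)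
    have hlim : Tendsto (fun t : ℝ => (fun k => t * r k)) (𝓝[<] 1) (𝓝 r) := by
      have h2 : Tendsto (fun t : ℝ => (fun k => t * r k)) (𝓝 1) (𝓝 (fun k => 1 * r k)) :=
        Continuous.tendsto (by fun_prop) 1
      simp only [one_mul] at h2
      exact tendsto_nhdsWithin_of_tendsto_nhds h2
    refine mem_closure_of_tendsto hlim ?_
    filter_upwards [Ioo_mem_nhdsLT (show (0 : ℝ) < 1 by norm_num)] with t ht
    have h := achiev Wy Wz hWy hWz hACz' hACy ρ (fun k => (hρ k).1) hρ1 hχ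
      (fun k => t * r k / q)
      (fun k => div_nonneg (mul_nonneg ht.1.le (hr k).1) hq0.le)
      (fun k => by
        rcases (hr k).1.eq_or_lt with h0 | h0
        · left; simp [← h0]
        · right
          rw [div_lt_iff₀ hq0]
          have h3 := (hr k).2
          have h4 := ht.2
          nlinarith)
    have heq : ∀ k, t * r k / q * q = t * r k := fun k => div_mul_cancel₀ _ hq0.ne'
    simp only [← hq, heq] at h
    exact h
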